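/- arXiv:1508.01721 — 2 statements merged into one kernel-verified Lean document; each statement's English description precedes it below -/
import Mathlib

section
/- Let m ≥ 2 and t ≥ 2. The group homomorphism ψ : B(Ã_{m−1}) → B(Ã_{tm−1}) determined by ψ(s_i) = s_i s_{i+m} s_{i+2m} ⋯ s_{i+(t−1)m} for i ∈ ℤ/m (where the generators on the right are indexed by the corresponding residues in ℤ/tm) is well defined and injective. -/
/-- The braid relation word `s_i s_j s_i (s_j s_i s_j)⁻¹` in a free group. -/
def braidRelWord {I : Type*} (i j : I) : FreeGroup I :=
  FreeGroup.of i * FreeGroup.of j * FreeGroup.of i *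
    (FreeGroup.of j * FreeGroup.of i * FreeGroup.of j)⁻¹

/-- The commutation relation word `s_i s_j (s_j s_i)⁻¹` in a free group. -/
def commRelWord {I : Type*} (i j : I) : FreeGroup I :=
  FreeGroup.of i * FreeGroup.of j * (FreeGroup.of j * FreeGroup.of i)⁻¹

/-- The defining relations of the affine braid group `B(Ã_{n-1})`: for `n ≥ 3` the braid
relations `s_i s_{i+1} s_i = s_{i+1} s_i s_{i+1}` (`i ∈ ℤ/n`) and the commutation relations
`s_i s_j = s_j s_i` for `i - j ≠ ±1`; for `n = 2` there are no relations, so that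
`B(Ã_1)` is the free group on two generators. -/
def affineBraidRels (n : ℕ) : Set (FreeGroup (ZMod n)) :=
  if n ≤ 2 then ∅
  else {r | (∃ i : ZMod n, r = braidRelWord i (i + 1)) ∨
            (∃ i j : ZMod n, i - j ≠ 1 ∧ i - j ≠ -1 ∧ r = commRelWord i j)}

/-- The affine braid group `B(Ã_{n-1})`. -/
abbrev AffineBraidGroup (n : ℕ) := PresentedGroup (affineBraidRels n)

/-- The generator `s_i` of the affine braid group `B(Ã_{n-1})`, `i ∈ ℤ/n`. -/
def affineBraidGen (n : ℕ) (i : ZMod n) : AffineBraidGroup n := PresentedGroup.of i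

/-- The element `g_i = s_i s_{i+m} s_{i+2m} ⋯ s_{i+(t-1)m}` of the affine braid group
`B(Ã_{tm−1})`, for `i ∈ ℤ/m` (the generators on the right indexed by the corresponding
residues in `ℤ/tm`). -/
def liftedGen (m t : ℕ) (i : ZMod m) : AffineBraidGroup (t * m) :=
  ((List.range t).map fun s =>
    affineBraidGen (t * m) ((i.val + s * m : ℕ) : ZMod (t * m))).prod

/-!
Let `s_i` act on the free group on `x_j`, `j ∈ ℤ`, by half twists at all integers congruent to `i`.
Then `ψ(s_i)` and `s_i` give the same automorphism. Once the actions are known to be faithful, `ψ`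
is therefore an inclusion of subgroups of `Aut F_ℤ`.

Faithfulness is shown for the extended affine braid group, in which a further generator `τ` rotates
the `s_i`. With `n = K + 2`, it is generated by `s_0, …, s_K` and `b = τ (s_0 ⋯ s_K)⁻¹`, which
satisfy the braid relations of type `B`, so each of its elements is a product `u v` of a word `u` in
certain conjugates of `b` and a word `v` in `s_0, …, s_K`. Here `v` fixes `c = x_0 ⋯ x_{K+1}`, while
`u` moves `c` to `p⁻¹ c φ(p)`, where `φ` is the shift `x_j ↦ x_{j+n}`. The element `u` is determined
by `κ(p)`, where `κ` fixes `x_0, …, x_{K+1}` and turns `φ` into conjugation by `c⁻¹`. If `u v` acts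
trivially, then `p⁻¹ c φ(p) = c`, and lifting `κ` to a lamplighter group shows that `κ(p) = 1`, so
`u = 1`. Then `v = 1` by Artin's theorem, which follows from the same argument by induction on the
number of strands.
-/

section BraidChain

variable {G : Type*} [Group G]

lemma commute_of_semiconjBy {w x x' y y' : G} (hx : SemiconjBy w x x') (hy : SemiconjBy w y y')
    (h : Commute x y) : Commute x' y' := by
  rw [← mul_inv_eq_iff_eq_mul.2 hx.eq, ← mul_inv_eq_iff_eq_mul.2 hy.eq, Commute.conj_iff]
  exact h

/-- The elements `q 0, …, q (n - 1)` satisfy the braid relations of type `A`. -/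
structure IsBraidChain (q : ℕ → G) (n : ℕ) : Prop where
  braid : ∀ i, i + 1 < n → q i * q (i + 1) * q i = q (i + 1) * q i * q (i + 1)
  comm : ∀ i j, i + 1 < j → j < n → Commute (q i) (q j)

namespace IsBraidChain

variable {q : ℕ → G} {n : ℕ}

lemma tail (h : IsBraidChain q (n + 1)) : IsBraidChain (fun i => q (i + 1)) n where
  braid i hi := h.braid (i + 1) (by omega)
  comm i j hij hj := h.comm (i + 1) (j + 1) (by omega) (by omega)

lemma semiconjBy_mul_succ (h : IsBraidChain q n) {i : ℕ} (hi : i + 1 < n) :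
    SemiconjBy (q i * q (i + 1)) (q i) (q (i + 1)) :=
  (h.braid i hi).trans (mul_assoc _ _ _)

lemma semiconjBy_succ_mul (h : IsBraidChain q n) {i : ℕ} (hi : i + 1 < n) :
    SemiconjBy (q (i + 1) * q i) (q (i + 1)) (q i) :=
  (h.braid i hi).symm.trans (mul_assoc _ _ _)

end IsBraidChain

/-- The elements `b, r 0, …, r (n - 1)` satisfy the braid relations of type `B`, where `b` is the
generator at the end of the double edge. -/
structure IsTypeBChain (r : ℕ → G) (b : G) (n : ℕ) : Prop extends IsBraidChain r n where
  quartic : 0 < n → r 0 * b * r 0 * b = b * r 0 * b * r 0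
  comm_end : ∀ i, 0 < i → i < n → Commute b (r i)

/-- The conjugates `r (d - 1) * ⋯ * r 0 * b * (r 0)⁻¹ * ⋯ * (r (d - 1))⁻¹`. In an Artin group of
type `B` they are free generators of the normal closure of `b`. -/
def pushGen (r : ℕ → G) (b : G) : ℕ → G
  | 0 => b
  | d + 1 => r d * pushGen r b d * (r d)⁻¹

lemma semiconjBy_pushGen (r : ℕ → G) (b : G) (d : ℕ) :
    SemiconjBy (r d) (pushGen r b d) (pushGen r b (d + 1)) :=
  SemiconjBy.conj_mk _ _

namespace IsTypeBChain

variable {r : ℕ → G} {b : G} {n : ℕ}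

lemma commute_pushGen_of_lt (h : IsTypeBChain r b n) {i j : ℕ} (hj : j < i) (hi : i < n) :
    Commute (pushGen r b j) (r i) := by
  induction j with
  | zero => exact h.comm_end i hj hi
  | succ j ih =>
    exact commute_of_semiconjBy (semiconjBy_pushGen r b j) (h.comm j i hj hi) (ih (by omega))

lemma commute_pushGen_of_succ_lt (h : IsTypeBChain r b n) {i j : ℕ} (hi : i + 1 < j)
    (hj : j ≤ n) : Commute (pushGen r b j) (r i) := by
  induction j, hi using Nat.le_induction with
  | base =>
    exact commute_of_semiconjBy
      ((semiconjBy_pushGen r b (i + 1)).mul_left (semiconjBy_pushGen r b i))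
      (h.semiconjBy_succ_mul (by omega)) (h.commute_pushGen_of_lt (by omega) (by omega))
  | succ j hij ih =>
    exact commute_of_semiconjBy (semiconjBy_pushGen r b j) (h.comm i j hij (by omega)).symm
      (ih (by omega))

lemma commute_pushGen_mul_pushGen (h : IsTypeBChain r b n) {i : ℕ} (hi : i < n) :
    Commute (pushGen r b i * pushGen r b (i + 1)) (r i) := by
  induction i with
  | zero =>
    change b * (r 0 * b * (r 0)⁻¹) * r 0 = r 0 * (b * (r 0 * b * (r 0)⁻¹))
    calc b * (r 0 * b * (r 0)⁻¹) * r 0 = b * r 0 * b * r 0 * (r 0)⁻¹ := by group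
      _ = r 0 * b * r 0 * b * (r 0)⁻¹ := by rw [h.quartic hi]
      _ = r 0 * (b * (r 0 * b * (r 0)⁻¹)) := by group
  | succ i ih =>
    have step : SemiconjBy (r i * r (i + 1)) (pushGen r b i) (pushGen r b (i + 1)) :=
      (semiconjBy_pushGen r b i).mul_left (h.commute_pushGen_of_lt (by omega) hi).symm
    have step' : SemiconjBy (r i * r (i + 1)) (pushGen r b (i + 1)) (pushGen r b (i + 2)) :=
      SemiconjBy.mul_left (h.commute_pushGen_of_succ_lt (by omega) (by omega)).symm
        (semiconjBy_pushGen r b (i + 1))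
    exact commute_of_semiconjBy (step.mul_right step') (h.semiconjBy_mul_succ hi) (ih (by omega))

lemma semiconjBy_pushGen_succ (h : IsTypeBChain r b n) {i : ℕ} (hi : i < n) :
    SemiconjBy (r i) (pushGen r b (i + 1))
      ((pushGen r b (i + 1))⁻¹ * pushGen r b i * pushGen r b (i + 1)) := by
  have hmul : SemiconjBy (r i) (pushGen r b i * pushGen r b (i + 1)) _ :=
    (h.commute_pushGen_mul_pushGen hi).symm
  have := (semiconjBy_pushGen r b i).inv_right.mul_right hmul
  rwa [inv_mul_cancel_left, ← mul_assoc] at this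

lemma exists_semiconjBy_pushGen (h : IsTypeBChain r b n) {i j : ℕ} (hi : i < n) (hj : j ≤ n) :
    (∃ z ∈ Subgroup.closure (pushGen r b '' Set.Iic n), SemiconjBy (r i) (pushGen r b j) z) ∧
      ∃ z ∈ Subgroup.closure (pushGen r b '' Set.Iic n), SemiconjBy (r i) z (pushGen r b j) := by
  set A := Subgroup.closure (pushGen r b '' Set.Iic n)
  have mem {k : ℕ} (hk : k ≤ n) : pushGen r b k ∈ A := Subgroup.subset_closure ⟨k, hk, rfl⟩
  have of_commute (hc : Commute (pushGen r b j) (r i)) :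
      (∃ z ∈ A, SemiconjBy (r i) (pushGen r b j) z) ∧
        ∃ z ∈ A, SemiconjBy (r i) z (pushGen r b j) :=
    ⟨⟨_, mem hj, hc.symm⟩, _, mem hj, hc.symm⟩
  have hsucc := semiconjBy_pushGen r b i
  rcases lt_trichotomy j i with hlt | rfl | hgt
  · exact of_commute (h.commute_pushGen_of_lt hlt hi)
  · refine ⟨⟨_, mem hi, hsucc⟩,
      pushGen r b j * pushGen r b (j + 1) * (pushGen r b j)⁻¹,
      mul_mem (mul_mem (mem hj) (mem hi)) (inv_mem (mem hj)), ?_⟩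
    have hmul : SemiconjBy (r j) (pushGen r b j * pushGen r b (j + 1)) _ :=
      (h.commute_pushGen_mul_pushGen hi).symm
    simpa using hmul.mul_right hsucc.inv_right
  · obtain rfl | hlt := (Nat.succ_le_of_lt hgt).eq_or_lt
    · refine ⟨⟨_, ?_, h.semiconjBy_pushGen_succ hi⟩, _, mem (by omega), hsucc⟩
      exact mul_mem (mul_mem (inv_mem (mem hj)) (mem (by omega))) (mem hj)
    · exact of_commute (h.commute_pushGen_of_succ_lt hlt hj)

lemma mem_normalizer_closure_pushGen (h : IsTypeBChain r b n) {i : ℕ} (hi : i < n) :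
    r i ∈ Subgroup.normalizer (Subgroup.closure (pushGen r b '' Set.Iic n) : Set G) := by
  refine Subgroup.mem_normalizer_iff_map_conj_eq.2 (le_antisymm ?_ ?_)
  · rw [Subgroup.map_le_iff_le_comap, Subgroup.closure_le]
    rintro _ ⟨j, hj, rfl⟩
    obtain ⟨z, hz, hs⟩ := (h.exists_semiconjBy_pushGen hi hj).1
    simpa [hs.eq] using hz
  · rw [Subgroup.closure_le]
    rintro _ ⟨j, hj, rfl⟩
    obtain ⟨z, hz, hs⟩ := (h.exists_semiconjBy_pushGen hi hj).2
    exact ⟨z, hz, by simp [hs.eq]⟩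

-- In an Artin group of type `B` this is its splitting over the normal closure of `b`.
lemma exists_eq_mul (h : IsTypeBChain r b n) {g : G}
    (hg : g ∈ Subgroup.closure (insert b (r '' Set.Iio n))) :
    ∃ u ∈ Subgroup.closure (pushGen r b '' Set.Iic n),
      ∃ v ∈ Subgroup.closure (r '' Set.Iio n), u * v = g := by
  have hb : b ∈ Subgroup.closure (pushGen r b '' Set.Iic n) :=
    Subgroup.subset_closure ⟨0, Nat.zero_le n, rfl⟩
  have hr : Subgroup.closure (r '' Set.Iio n) ≤
      Subgroup.normalizer (Subgroup.closure (pushGen r b '' Set.Iic n) : Set G) := by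
    rw [Subgroup.closure_le]
    rintro _ ⟨i, hi, rfl⟩
    exact h.mem_normalizer_closure_pushGen hi
  simp only [← SetLike.mem_coe, ← Set.mem_mul]
  rw [← Subgroup.coe_mul_of_right_le_normalizer_left _ _ hr]
  refine (Subgroup.closure_le _).2 (Set.insert_subset ?_ ?_) hg
  · exact Subgroup.mem_sup_left hb
  · exact fun x hx => Subgroup.mem_sup_right (Subgroup.subset_closure hx)

end IsTypeBChain

end BraidChain

section TwistedConjugation

variable {G X Y : Type*} [Group G] [Group X] [Group Y] [MulDistribMulAction G X]

/-- The pairs `(g, v)` such that `g` preserves `κ` and moves `c` to its twisted conjugate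
`p⁻¹ * c * φ p` by an element `p` with `κ p = v`. -/
def twistSubgroup (φ : X →* X) (κ : X →* Y) (hφ : ∀ (g : G) (f : X), g • φ f = φ (g • f))
    (c : X) : Subgroup (G × Y) where
  carrier := {a | (∀ f, κ (a.1 • f) = κ f) ∧ ∃ p, a.1 • c = p⁻¹ * c * φ p ∧ κ p = a.2}
  one_mem' := ⟨by simp, 1, by simp⟩
  mul_mem' := by
    rintro ⟨g, v⟩ ⟨g', v'⟩ ⟨hκ, p, hp, rfl⟩ ⟨hκ', p', hp', rfl⟩
    refine ⟨fun f => by simp [mul_smul, hκ, hκ'], p * g • p', ?_, by simp [hκ]⟩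
    simp only [Prod.fst_mul, mul_smul, hp', smul_mul', smul_inv', hp, hφ, map_mul]
    group
  inv_mem' := by
    rintro ⟨g, v⟩ ⟨hκ, p, hp, rfl⟩
    have hκ' (f : X) : κ (g⁻¹ • f) = κ f := by rw [← hκ, smul_inv_smul]
    refine ⟨hκ', (g⁻¹ • p)⁻¹, ?_, by simp [hκ']⟩
    have : c = (g⁻¹ • p)⁻¹ * g⁻¹ • c * φ (g⁻¹ • p) := by
      simpa [← hφ] using congrArg (g⁻¹ • ·) hp
    rw [inv_inv, map_inv, eq_mul_inv_iff_mul_eq, ← inv_mul_eq_iff_eq_mul, ← mul_assoc]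
    exact this.symm

variable {φ : X →* X} {κ : X →* Y} {hφ : ∀ (g : G) (f : X), g • φ f = φ (g • f)} {c : X}

lemma conj_mem_twistSubgroup [MulDistribMulAction G Y] {r g : G} {v : Y} (hrc : r • c = c)
    (hκ : ∀ f, κ (r • f) = r • κ f) (h : (g, v) ∈ twistSubgroup φ κ hφ c) :
    (r * g * r⁻¹, r • v) ∈ twistSubgroup φ κ hφ c := by
  obtain ⟨hg, p, hp, rfl⟩ := h
  refine ⟨fun f => ?_, r • p, ?_, hκ p⟩
  · dsimp only at hg ⊢
    rw [mul_smul, mul_smul, hκ, hg, ← hκ, smul_inv_smul]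
  · dsimp only at hp ⊢
    rw [mul_smul, mul_smul, inv_smul_eq_iff.2 hrc.symm, hp, smul_mul', smul_mul', smul_inv', hrc,
      hφ]

lemma exists_freeGroup_lift_mem {α : Type*} {H : Subgroup (G × Y)} {y : α → G} {x : α → Y}
    {S : Set α} (hH : ∀ j ∈ S, (y j, x j) ∈ H) {u : G} (hu : u ∈ Subgroup.closure (y '' S)) :
    ∃ w : FreeGroup S, FreeGroup.lift (fun j : S => y j) w = u ∧
      (u, FreeGroup.lift (fun j : S => x j) w) ∈ H := by
  rw [Set.image_eq_range, ← FreeGroup.range_lift_eq_closure] at hu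
  obtain ⟨w, rfl⟩ := hu
  refine ⟨w, rfl, ?_⟩
  have hrange : (FreeGroup.lift fun j : S => (y j, x j)).range ≤ H := by
    rw [FreeGroup.range_lift_eq_closure, Subgroup.closure_le]
    rintro _ ⟨j, rfl⟩
    exact hH j j.2
  have hprod : (FreeGroup.lift fun j : S => (y j, x j)) =
      (FreeGroup.lift fun j : S => y j).prod (FreeGroup.lift fun j : S => x j) := by
    ext <;> simp
  exact hrange ⟨w, DFunLike.congr_fun hprod w⟩

/-- The generator `b` only moves `c` inside its twisted conjugacy class, and `κ` reads off the
twisting element; on the free group spanned by the conjugates of `b` this is an embedding, so only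
its trivial element can fix `c`. -/
theorem IsTypeBChain.mem_closure_of_smul_eq [MulDistribMulAction G Y] {r : ℕ → G} {b : G} {n : ℕ}
    (h : IsTypeBChain r b n) {x : ℕ → Y} (hκ : ∀ i < n, ∀ f, κ (r i • f) = r i • κ f)
    (hrc : ∀ i < n, r i • c = c) (hb : (b, x 0) ∈ twistSubgroup φ κ hφ c)
    (hx : ∀ i < n, r i • x i = x (i + 1))
    (hfree : Function.Injective (FreeGroup.lift fun j : Set.Iic n => x j))
    (hstab : ∀ p, p⁻¹ * c * φ p = c → κ p = 1) {g : G}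
    (hg : g ∈ Subgroup.closure (insert b (r '' Set.Iio n))) (hgc : g • c = c) :
    g ∈ Subgroup.closure (r '' Set.Iio n) := by
  have hy : ∀ j ≤ n, (pushGen r b j, x j) ∈ twistSubgroup φ κ hφ c := by
    intro j hj
    induction j with
    | zero => exact hb
    | succ j ih =>
      rw [← hx j hj]
      exact conj_mem_twistSubgroup (hrc j hj) (hκ j hj) (ih (by omega))
  obtain ⟨u, hu, v, hv, rfl⟩ := h.exists_eq_mul hg
  have hvc : v • c = c :=
    (Subgroup.closure_le (MulAction.stabilizer G c)).2 (Set.forall_mem_image.2 hrc) hv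
  obtain ⟨w, rfl, -, p, hp, hpw⟩ := exists_freeGroup_lift_mem (S := Set.Iic n) hy hu
  rw [mul_smul, hvc] at hgc
  have hw : w = 1 := hfree (by rw [map_one, ← hstab p (hp.symm.trans hgc)]; exact hpw.symm)
  simpa [hw] using hv

end TwistedConjugation

section RangeProd

variable {G : Type*} [Group G]

/-- The ordered product `q 0 * q 1 * ⋯ * q (d - 1)`. -/
def rangeProd (q : ℕ → G) (d : ℕ) : G := ((List.range d).map q).prod

@[simp] lemma rangeProd_zero (q : ℕ → G) : rangeProd q 0 = 1 := rfl

lemma rangeProd_succ (q : ℕ → G) (d : ℕ) : rangeProd q (d + 1) = rangeProd q d * q d :=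
  List.prod_range_succ q d

lemma rangeProd_succ' (q : ℕ → G) (d : ℕ) :
    rangeProd q (d + 1) = q 0 * rangeProd (fun i => q (i + 1)) d :=
  List.prod_range_succ' q d

end RangeProd

namespace IsBraidChain

variable {G : Type*} [Group G] {q : ℕ → G} {n : ℕ}

lemma commute_rangeProd (h : IsBraidChain q n) {d i : ℕ} (hd : d < i) (hi : i < n) :
    Commute (rangeProd q d) (q i) := by
  induction d with
  | zero => exact Commute.one_left (q i)
  | succ d ih =>
    rw [rangeProd_succ]
    exact (ih (by omega)).mul_left (h.comm d i hd hi)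

lemma semiconjBy_rangeProd (h : IsBraidChain q n) {d i : ℕ} (hi : i + 1 < d) (hd : d ≤ n) :
    SemiconjBy (rangeProd q d) (q i) (q (i + 1)) := by
  induction d, hi using Nat.le_induction with
  | base =>
    rw [rangeProd_succ, rangeProd_succ, mul_assoc]
    exact SemiconjBy.mul_left (h.commute_rangeProd (by omega) (by omega))
      (h.semiconjBy_mul_succ (by omega))
  | succ d hid ih =>
    rw [rangeProd_succ]
    exact (ih (by omega)).mul_left (h.comm i d hid (by omega)).symm

lemma isTypeBChain_tail (h : IsBraidChain q (n + 1)) :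
    IsTypeBChain (fun i => q (i + 1)) (q 0 ^ 2) n where
  toIsBraidChain := h.tail
  quartic hn := by
    have hcomm : Commute (q 1 * q 0 * (q 0 * q 1)) (q 0) :=
      (h.semiconjBy_succ_mul (by omega)).mul_left (h.semiconjBy_mul_succ (by omega))
    simpa only [pow_two, mul_assoc] using (hcomm.pow_right 2).eq
  comm_end i hi hin := (h.comm 0 (i + 1) (by omega) (by omega)).pow_left 2

/-- The subgroup generated by `q 0 ^ 2, q 1, …, q n`. For the standard generators of a braid group
it consists of the braids that fix the bottom strand. -/
def bottomSubgroup (q : ℕ → G) (n : ℕ) : Subgroup G :=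
  Subgroup.closure (insert (q 0 ^ 2) ((fun i => q (i + 1)) '' Set.Iio n))

lemma sq_mem_bottomSubgroup (q : ℕ → G) (n : ℕ) : q 0 ^ 2 ∈ bottomSubgroup q n :=
  Subgroup.subset_closure (Set.mem_insert _ _)

lemma succ_mem_bottomSubgroup (q : ℕ → G) {i : ℕ} (hi : i < n) :
    q (i + 1) ∈ bottomSubgroup q n :=
  Subgroup.subset_closure (Set.mem_insert_of_mem _ ⟨i, hi, rfl⟩)

lemma exists_semiconjBy_rangeProd_sq (h : IsBraidChain q (n + 1)) {e : ℕ} (he : e ≤ n) :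
    ∃ z ∈ bottomSubgroup q n, SemiconjBy (rangeProd q e) (q e ^ 2) z := by
  induction e with
  | zero => exact ⟨q 0 ^ 2, sq_mem_bottomSubgroup q n, SemiconjBy.one_left _⟩
  | succ e ih =>
    obtain ⟨z, hz, hs⟩ := ih (by omega)
    have hq := succ_mem_bottomSubgroup q he
    have hcomm : SemiconjBy (rangeProd q e) (q (e + 1)) (q (e + 1)) :=
      h.commute_rangeProd (by omega) (by omega)
    have hconj : SemiconjBy (q e) (q (e + 1) ^ 2) ((q (e + 1))⁻¹ * q e ^ 2 * q (e + 1)) := by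
      simpa using (SemiconjBy.conj_mk (q (e + 1))⁻¹ (q e ^ 2)).mul_left
        ((h.semiconjBy_succ_mul (i := e) (by omega)).pow_right 2)
    refine ⟨(q (e + 1))⁻¹ * z * q (e + 1), mul_mem (mul_mem (inv_mem hq) hz) hq, ?_⟩
    rw [rangeProd_succ]
    exact ((hcomm.inv_right.mul_right hs).mul_right hcomm).mul_left hconj

lemma exists_rangeProd_mul (h : IsBraidChain q (n + 1)) {i d : ℕ} (hi : i < n + 1)
    (hd : d ≤ n + 1) : ∃ a ∈ bottomSubgroup q n,
      rangeProd q d * q i = a * rangeProd q (Equiv.swap i (i + 1) d) := by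
  obtain hlt | rfl | rfl | hgt : d < i ∨ d = i ∨ d = i + 1 ∨ i + 1 < d := by omega
  · obtain ⟨i, rfl⟩ := Nat.exists_eq_add_one_of_ne_zero (by omega : i ≠ 0)
    refine ⟨q (i + 1), succ_mem_bottomSubgroup q (by omega), ?_⟩
    rw [Equiv.swap_apply_of_ne_of_ne (by omega) (by omega)]
    exact h.commute_rangeProd hlt hi
  · exact ⟨1, one_mem _, by rw [Equiv.swap_apply_left, one_mul, rangeProd_succ]⟩
  · obtain ⟨z, hz, hs⟩ := h.exists_semiconjBy_rangeProd_sq (Nat.lt_succ_iff.1 hi)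
    refine ⟨z, hz, ?_⟩
    rw [Equiv.swap_apply_right, ← hs.eq, rangeProd_succ, pow_two, mul_assoc]
  · refine ⟨q (i + 1), succ_mem_bottomSubgroup q (by omega), ?_⟩
    rw [Equiv.swap_apply_of_ne_of_ne (by omega) (by omega)]
    exact h.semiconjBy_rangeProd hgt hd

lemma exists_eq_mul_rangeProd (h : IsBraidChain q (n + 1)) {g : G}
    (hg : g ∈ Subgroup.closure (q '' Set.Iio (n + 1))) :
    ∃ d ≤ n + 1, ∃ a ∈ bottomSubgroup q n, g = a * rangeProd q d := by
  have swap_le {i d : ℕ} (hi : i < n + 1) (hd : d ≤ n + 1) :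
      Equiv.swap i (i + 1) d ≤ n + 1 := by
    rw [Equiv.swap_apply_def]
    split_ifs <;> omega
  induction hg using Subgroup.closure_induction_right with
  | one => exact ⟨0, Nat.zero_le _, 1, one_mem _, by simp⟩
  | mul_right x _ y hy ih =>
    obtain ⟨d, hd, a, ha, rfl⟩ := ih
    obtain ⟨i, hi, rfl⟩ := hy
    obtain ⟨a', ha', hmul⟩ := h.exists_rangeProd_mul hi hd
    exact ⟨_, swap_le hi hd, a * a', mul_mem ha ha', by rw [mul_assoc, hmul, mul_assoc]⟩
  | mul_inv_cancel x _ y hy ih =>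
    obtain ⟨d, hd, a, ha, rfl⟩ := ih
    obtain ⟨i, hi, rfl⟩ := hy
    obtain ⟨a', ha', hmul⟩ := h.exists_rangeProd_mul hi (swap_le hi hd)
    refine ⟨_, swap_le hi hd, a * a'⁻¹, mul_mem ha (inv_mem ha'), ?_⟩
    rw [Equiv.swap_apply_self, ← inv_mul_eq_iff_eq_mul, ← mul_assoc, ← eq_mul_inv_iff_mul_eq]
      at hmul
    rw [mul_assoc, mul_assoc, ← hmul]

end IsBraidChain

section HalfTwists

open FreeGroup (of lift)

lemma mulAut_freeGroup_ext {α : Type*} {f g : MulAut (FreeGroup α)}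
    (h : ∀ a, f (of a) = g (of a)) : f = g := by
  ext x
  exact DFunLike.congr_fun (FreeGroup.ext_hom _ _ h : f.toMonoidHom = g.toMonoidHom) x

/-- A set of integers without two consecutive elements. -/
def IsSparse (T : Set ℤ) : Prop := ∀ j ∈ T, j + 1 ∉ T

lemma IsSparse.mono {T U : Set ℤ} (hU : IsSparse U) (h : T ⊆ U) : IsSparse T :=
  fun j hj hj' => hU j (h hj) (h hj')

open scoped Classical in
/-- The automorphism of the free group on `x_j`, `j ∈ ℤ`, given by the simultaneous half twists
`x_j ↦ x_{j+1}`, `x_{j+1} ↦ x_{j+1}⁻¹ x_j x_{j+1}` for `j ∈ T`. -/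
noncomputable def halfTwists (T : Set ℤ) (hT : IsSparse T) : MulAut (FreeGroup ℤ) :=
  MonoidHom.toMulEquiv
    (lift fun j => if j ∈ T then of (j + 1)
      else if j - 1 ∈ T then (of j)⁻¹ * of (j - 1) * of j else of j)
    (lift fun j => if j ∈ T then of j * of (j + 1) * (of j)⁻¹
      else if j - 1 ∈ T then of (j - 1) else of j)
    (by
      ext j
      by_cases h1 : j ∈ T
      · simp [h1, hT j h1]
      · by_cases h2 : j - 1 ∈ T <;> simp [h1, h2, mul_assoc])
    (by
      ext j
      by_cases h1 : j ∈ T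
      · simp [h1, hT j h1, mul_assoc]
      · by_cases h2 : j - 1 ∈ T <;> simp [h1, h2])

variable {T T' : Set ℤ} {hT : IsSparse T} {j : ℤ}

lemma halfTwists_of_mem (hj : j ∈ T) : halfTwists T hT (of j) = of (j + 1) := by
  simp [halfTwists, hj]

lemma halfTwists_of_add_one (hj : j ∈ T) :
    halfTwists T hT (of (j + 1)) = (of (j + 1))⁻¹ * of j * of (j + 1) := by
  simp [halfTwists, hj, hT j hj]

lemma halfTwists_of_notMem (hj : j ∉ T) (hj' : j - 1 ∉ T) : halfTwists T hT (of j) = of j := by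
  simp [halfTwists, hj, hj']

lemma halfTwists_of_mem_of_disjoint (hU : IsSparse (T ∪ T')) (hd : Disjoint T T') (hj : j ∈ T') :
    halfTwists T hT (of j) = of j ∧ halfTwists T hT (of (j + 1)) = of (j + 1) := by
  have hjT : j ∉ T := fun h => Set.disjoint_left.1 hd h hj
  have hpred : j - 1 ∉ T := fun h => hU _ (.inl h) (.inr (by simpa using hj))
  have hsucc : j + 1 ∉ T := fun h => hU j (.inr hj) (.inl h)
  exact ⟨halfTwists_of_notMem hjT hpred, halfTwists_of_notMem hsucc (by simpa using hjT)⟩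

lemma halfTwists_mul (hT' : IsSparse T') (hU : IsSparse (T ∪ T')) (hd : Disjoint T T') :
    halfTwists T hT * halfTwists T' hT' = halfTwists (T ∪ T') hU := by
  refine mulAut_freeGroup_ext fun j => ?_
  have hU' : IsSparse (T' ∪ T) := Set.union_comm T T' ▸ hU
  by_cases hj : j ∈ T ∪ T'
  · rw [halfTwists_of_mem hj]
    rcases hj with hj | hj
    · simp [(halfTwists_of_mem_of_disjoint hU' hd.symm hj).1, halfTwists_of_mem hj]
    · simp [(halfTwists_of_mem_of_disjoint hU hd hj).2, halfTwists_of_mem hj]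
  by_cases hj' : j - 1 ∈ T ∪ T'
  · obtain ⟨i, rfl⟩ : ∃ i, j = i + 1 := ⟨j - 1, by ring⟩
    rw [add_sub_cancel_right] at hj'
    rw [halfTwists_of_add_one hj']
    rcases hj' with hi | hi
    · simp [(halfTwists_of_mem_of_disjoint hU' hd.symm hi).2, halfTwists_of_add_one hi]
    · simp [halfTwists_of_mem_of_disjoint hU hd hi, halfTwists_of_add_one hi]
  · rw [halfTwists_of_notMem hj hj', MulAut.mul_apply]
    rw [Set.mem_union, not_or] at hj hj'
    rw [halfTwists_of_notMem hj.2 hj'.2, halfTwists_of_notMem hj.1 hj'.1]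

lemma halfTwists_congr {hT' : IsSparse T'} (h : T = T') : halfTwists T hT = halfTwists T' hT' := by
  subst h; rfl

lemma halfTwists_commute (hT' : IsSparse T') (hU : IsSparse (T ∪ T')) (hd : Disjoint T T') :
    Commute (halfTwists T hT) (halfTwists T' hT') := by
  rw [Commute, SemiconjBy, halfTwists_mul hT' hU hd,
    halfTwists_mul hT (by rwa [Set.union_comm]) hd.symm]
  exact halfTwists_congr (Set.union_comm _ _)

lemma halfTwists_braid (hT' : IsSparse T') (hsucc : ∀ j, j + 1 ∈ T' ↔ j ∈ T)
    (hadd_two : ∀ j ∈ T, j + 2 ∉ T) :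
    halfTwists T hT * halfTwists T' hT' * halfTwists T hT =
      halfTwists T' hT' * halfTwists T hT * halfTwists T' hT' := by
  have hmem (j : ℤ) : j ∈ T' ↔ j - 1 ∈ T := by rw [← hsucc, sub_add_cancel]
  have fix_add_two {j : ℤ} (hj : j ∈ T) : halfTwists T hT (of (j + 2)) = of (j + 2) :=
    halfTwists_of_notMem (hadd_two j hj) (by convert hT j hj using 2; ring)
  have fix' {j : ℤ} (hj : j ∈ T) : halfTwists T' hT' (of j) = of j := by
    refine halfTwists_of_notMem (fun h => hT _ ((hmem j).1 h) (by simpa using hj)) fun h => ?_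
    exact hadd_two _ ((hmem _).1 h) (by convert hj using 1; ring)
  have twist' {j : ℤ} (hj : j ∈ T) : halfTwists T' hT' (of (j + 1)) = of (j + 2) := by
    simpa [add_assoc] using halfTwists_of_mem (hT := hT') ((hsucc j).2 hj)
  have twist_succ' {j : ℤ} (hj : j ∈ T) :
      halfTwists T' hT' (of (j + 2)) = (of (j + 2))⁻¹ * of (j + 1) * of (j + 2) := by
    simpa [add_assoc] using halfTwists_of_add_one (hT := hT') ((hsucc j).2 hj)
  refine mulAut_freeGroup_ext fun j => ?_
  simp only [MulAut.mul_apply]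
  by_cases h0 : j ∈ T
  · simp [halfTwists_of_mem h0, fix' h0, twist' h0, fix_add_two h0]
  by_cases h1 : j - 1 ∈ T
  · obtain ⟨i, rfl⟩ : ∃ i, j = i + 1 := ⟨j - 1, by ring⟩
    rw [add_sub_cancel_right] at h1
    simp [halfTwists_of_mem h1, halfTwists_of_add_one h1, fix' h1, twist' h1, fix_add_two h1,
      twist_succ' h1]
  by_cases h2 : j - 2 ∈ T
  · obtain ⟨i, rfl⟩ : ∃ i, j = i + 2 := ⟨j - 2, by ring⟩
    rw [add_sub_cancel_right] at h2
    simp [halfTwists_of_add_one h2, fix' h2, twist' h2, fix_add_two h2, twist_succ' h2, mul_assoc]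
  have fixed : halfTwists T hT (of j) = of j := halfTwists_of_notMem h0 h1
  have fixed' : halfTwists T' hT' (of j) = of j := by
    refine halfTwists_of_notMem (by rwa [hmem]) ?_
    rw [hmem]
    convert h2 using 2
    ring
  simp [fixed, fixed']

end HalfTwists

section Lamplighter

open FreeGroup (of lift)
open RegularWreathProduct (inl rightHom)

open scoped Classical in
/-- The element of the lamplighter group `ℤ/2 ≀ Q` that switches the lamp at `1`. -/
noncomputable def lamp (Q : Type*) [Group Q] : Multiplicative (ZMod 2) ≀ᵣ Q :=
  ⟨Pi.mulSingle 1 (Multiplicative.ofAdd 1), 1⟩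

@[simp] lemma right_lamp (Q : Type*) [Group Q] : (lamp Q).right = 1 := rfl

-- Conjugation by `w` moves the lit lamp from `1` to `w.right`.
lemma right_eq_one_of_commute_lamp {Q : Type*} [Group Q] {w : Multiplicative (ZMod 2) ≀ᵣ Q}
    (h : Commute w (lamp Q)) : w.right = 1 := by
  by_contra hne
  have hlit := congrFun (congrArg RegularWreathProduct.left h.eq) w.right
  simp [lamp, Pi.mulSingle_apply, hne] at hlit

variable {α : Type*} {W : Set α}

/-- The endomorphism of a free group that kills the generators outside `W`. -/
noncomputable def truncate (W : Set α) : FreeGroup α →* FreeGroup α := lift (W.mulIndicator of)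

lemma truncate_of_mem {a : α} (h : a ∈ W) : truncate W (of a) = of a := by simp [truncate, h]

lemma truncate_of_notMem {a : α} (h : a ∉ W) : truncate W (of a) = 1 := by simp [truncate, h]

lemma truncate_eq_one_of_commute {f : FreeGroup α} {b : α} (hb : b ∉ W) (h : Commute f (of b)) :
    truncate W f = 1 := by
  classical
  let Θ : FreeGroup α →* Multiplicative (ZMod 2) ≀ᵣ FreeGroup α :=
    lift fun a => if a = b then lamp _ else inl (truncate W (of a))
  have hΘ : rightHom.comp Θ = truncate W := by
    ext a
    obtain rfl | hab := eq_or_ne a b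
    · simp [Θ, truncate_of_notMem hb]
    · simp [Θ, hab]
  have hlamp : Θ (of b) = lamp _ := by simp [Θ]
  rw [← hΘ]
  exact right_eq_one_of_commute_lamp (hlamp ▸ h.map Θ)

end Lamplighter

section ArtinChain

open FreeGroup (of lift)

variable {T W : Set ℤ} {hT : IsSparse T}

lemma freeGroup_hom_ext_halfTwists {H : Type*} [Group H] {α β : FreeGroup ℤ →* H}
    (hmem : ∀ j ∈ T, α (of j) = β (of j)) (hsucc : ∀ j ∈ T, α (of (j + 1)) = β (of (j + 1)))
    (hnot : ∀ j, j ∉ T → j - 1 ∉ T → α (of j) = β (of j)) : α = β := by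
  ext j
  by_cases hj : j ∈ T
  · exact hmem j hj
  by_cases hj' : j - 1 ∈ T
  · simpa using hsucc _ hj'
  · exact hnot j hj hj'

lemma truncate_halfTwists (hW : ∀ j ∈ T, j ∈ W ↔ j + 1 ∈ W) (f : FreeGroup ℤ) :
    truncate W (halfTwists T hT f) = halfTwists T hT (truncate W f) := by
  suffices h : (truncate W).comp (halfTwists T hT).toMonoidHom =
      (halfTwists T hT).toMonoidHom.comp (truncate W) from DFunLike.congr_fun h f
  refine freeGroup_hom_ext_halfTwists (T := T) (fun j hj => ?_) (fun j hj => ?_)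
    fun j hj hj' => ?_
  · by_cases hjW : j ∈ W
    · simp [halfTwists_of_mem hj, truncate_of_mem hjW, truncate_of_mem ((hW j hj).1 hjW)]
    · simp [halfTwists_of_mem hj, truncate_of_notMem hjW,
        truncate_of_notMem (mt (hW j hj).2 hjW)]
  · by_cases hjW : j ∈ W
    · simp [halfTwists_of_add_one hj, truncate_of_mem hjW, truncate_of_mem ((hW j hj).1 hjW)]
    · simp [halfTwists_of_add_one hj, truncate_of_notMem hjW,
        truncate_of_notMem (mt (hW j hj).2 hjW)]
  · by_cases hjW : j ∈ W
    · simp [halfTwists_of_notMem hj hj', truncate_of_mem hjW]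
    · simp [halfTwists_of_notMem hj hj', truncate_of_notMem hjW]

lemma truncate_halfTwists_halfTwists (hW : ∀ j ∈ T, j ∉ W) (f : FreeGroup ℤ) :
    truncate W (halfTwists T hT (halfTwists T hT f)) = truncate W f := by
  suffices h : (truncate W).comp (halfTwists T hT * halfTwists T hT).toMonoidHom = truncate W from
    DFunLike.congr_fun h f
  refine freeGroup_hom_ext_halfTwists (T := T) (fun j hj => ?_) (fun j hj => ?_)
    fun j hj hj' => ?_
  · simp [halfTwists_of_mem hj, halfTwists_of_add_one hj, truncate_of_notMem (hW j hj)]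
  · simp [halfTwists_of_mem hj, halfTwists_of_add_one hj, truncate_of_notMem (hW j hj)]
  · simp [halfTwists_of_notMem hj hj']

lemma isConj_smul_of_mem_closure {G X : Type*} [Group G] [Group X] [MulDistribMulAction G X]
    {S : Set G} {c : X} (hS : ∀ y ∈ S, IsConj c (y • c)) {g : G} (hg : g ∈ Subgroup.closure S) :
    IsConj c (g • c) := by
  have smul_isConj (y : G) {a b : X} (h : IsConj a b) : IsConj (y • a) (y • b) :=
    (MulDistribMulAction.toMonoidHom X y).map_isConj h
  induction hg using Subgroup.closure_induction with
  | mem y hy => exact hS y hy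
  | one => rw [one_smul]
  | mul y z _ _ hy hz =>
    rw [mul_smul]
    exact hy.trans (smul_isConj y hz)
  | inv y _ hy => simpa using (smul_isConj y⁻¹ hy).symm

lemma eq_of_isConj_of {α : Type*} {a b : α} (h : IsConj (of a) (of b)) : a = b := by
  classical
  let ε : FreeGroup α →* Multiplicative ℤ :=
    lift (Pi.mulSingle a (Multiplicative.ofAdd 1))
  have := isConj_iff_eq.1 (ε.map_isConj h)
  by_contra hne
  simp [ε, Ne.symm hne] at this

lemma lift_of_comp_injective {α β : Type*} {e : α → β} (he : Function.Injective e) :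
    Function.Injective (lift fun a => of (e a)) := by
  have hmap := FreeGroup.map_injective he
  rwa [FreeGroup.map_eq_lift] at hmap

/-- The elements `s i`, `i < N`, satisfy the braid relations and act on the free group on `x_j`,
`j ∈ ℤ`, by simultaneous half twists, of which exactly one, at `a + i`, moves one of
`x_a, …, x_{a+N}`: on these generators the `s i` act as the Artin generators. -/
structure IsArtinChain {G : Type*} [Group G] [MulDistribMulAction G (FreeGroup ℤ)] (a : ℤ)
    (s : ℕ → G) (N : ℕ) : Prop extends IsBraidChain s N where
  exists_halfTwists : ∀ i < N, ∃ (T : Set ℤ) (hT : IsSparse T),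
    (∀ f : FreeGroup ℤ, s i • f = halfTwists T hT f) ∧
      ∀ j, a - 1 ≤ j → j ≤ a + N → (j ∈ T ↔ j = a + i)

namespace IsArtinChain

variable {G : Type*} [Group G] [MulDistribMulAction G (FreeGroup ℤ)] {a : ℤ} {s : ℕ → G}
  {N i : ℕ}

lemma smul_of_self (h : IsArtinChain a s N) (hi : i < N) :
    s i • of (a + i) = (of (a + i + 1) : FreeGroup ℤ) := by
  obtain ⟨T, hT, hs, hTa⟩ := h.exists_halfTwists i hi
  rw [hs, halfTwists_of_mem ((hTa _ (by omega) (by omega)).2 rfl)]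

lemma smul_of_succ (h : IsArtinChain a s N) (hi : i < N) :
    s i • of (a + i + 1) = ((of (a + i + 1))⁻¹ * of (a + i) * of (a + i + 1) : FreeGroup ℤ) := by
  obtain ⟨T, hT, hs, hTa⟩ := h.exists_halfTwists i hi
  rw [hs, halfTwists_of_add_one ((hTa _ (by omega) (by omega)).2 rfl)]

lemma smul_of_of_ne (h : IsArtinChain a s N) (hi : i < N) {j : ℤ} (hj : a ≤ j) (hj' : j ≤ a + N)
    (hne : j ≠ a + i) (hne' : j ≠ a + i + 1) : s i • of j = (of j : FreeGroup ℤ) := by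
  obtain ⟨T, hT, hs, hTa⟩ := h.exists_halfTwists i hi
  rw [hs, halfTwists_of_notMem (mt (hTa j (by omega) hj').1 hne)
    (mt (hTa (j - 1) (by omega) (by omega)).1 (by omega))]

lemma truncate_smul (h : IsArtinChain a s N) (hi : i < N) (f : FreeGroup ℤ) :
    truncate (Set.Icc a (a + N)) (s i • f) = s i • truncate (Set.Icc a (a + N)) f := by
  obtain ⟨T, hT, hs, hTa⟩ := h.exists_halfTwists i hi
  rw [hs, hs, truncate_halfTwists fun j hj => ?_]
  have hbot : j ≠ a - 1 := by
    rintro rfl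
    have := (hTa _ le_rfl (by omega)).1 hj
    omega
  have htop : j ≠ a + N := by
    rintro rfl
    have := (hTa _ (by omega) le_rfl).1 hj
    omega
  simp only [Set.mem_Icc]
  omega

lemma tail (h : IsArtinChain a s (N + 1)) : IsArtinChain (a + 1) (fun i => s (i + 1)) N where
  toIsBraidChain := h.toIsBraidChain.tail
  exists_halfTwists i hi := by
    obtain ⟨T, hT, hs, hTa⟩ := h.exists_halfTwists (i + 1) (by omega)
    refine ⟨T, hT, hs, fun j hj hj' => ?_⟩
    rw [hTa j (by omega) (by push_cast; omega)]
    push_cast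
    omega

lemma truncate_sq_smul (h : IsArtinChain a s (N + 1)) (f : FreeGroup ℤ) :
    truncate (Set.Icc (a + 1) (a + 1 + N)) (s 0 ^ 2 • f) =
      truncate (Set.Icc (a + 1) (a + 1 + N)) f := by
  obtain ⟨T, hT, hs, hTa⟩ := h.exists_halfTwists 0 (by omega)
  rw [pow_two, mul_smul, hs, hs, truncate_halfTwists_halfTwists fun j hj hjW => ?_]
  rw [Set.mem_Icc] at hjW
  have := (hTa j (by omega) (by push_cast; omega)).1 hj
  omega

lemma isConj_rangeProd_smul (h : IsArtinChain a s N) {d : ℕ} (hd : d ≤ N) :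
    IsConj (of a : FreeGroup ℤ) (rangeProd s d • of (a + d)) := by
  induction d with
  | zero => rw [Nat.cast_zero, add_zero, rangeProd_zero, one_smul]
  | succ d ih =>
    refine (ih (by omega)).trans (isConj_iff.2 ⟨(rangeProd s d • of (a + d + 1))⁻¹, ?_⟩)
    rw [Nat.cast_add_one, ← add_assoc, rangeProd_succ, mul_smul, h.smul_of_succ hd]
    simp only [smul_mul', smul_inv', inv_inv]

lemma sq_smul_of (h : IsArtinChain a s (N + 1)) :
    s 0 ^ 2 • of a = ((of (a + 1))⁻¹ * of a * of (a + 1) : FreeGroup ℤ) := by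
  have hself := h.smul_of_self (i := 0) (by omega)
  have hsucc := h.smul_of_succ (i := 0) (by omega)
  rw [Nat.cast_zero, add_zero] at hself hsucc
  rw [pow_two, mul_smul, hself, hsucc]

lemma succ_smul_of (h : IsArtinChain a s (N + 1)) (hi : i < N) :
    s (i + 1) • of a = (of a : FreeGroup ℤ) :=
  h.smul_of_of_ne (by omega) le_rfl (by omega) (by omega) (by omega)

lemma isConj_smul_of_mem_bottomSubgroup (h : IsArtinChain a s (N + 1)) {u : G}
    (hu : u ∈ IsBraidChain.bottomSubgroup s N) : IsConj (of a : FreeGroup ℤ) (u • of a) := by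
  refine isConj_smul_of_mem_closure ?_ hu
  rintro _ (rfl | ⟨i, hi, rfl⟩)
  · rw [h.sq_smul_of]
    exact isConj_iff.2 ⟨(of (a + 1))⁻¹, by rw [inv_inv]⟩
  · change IsConj _ (s (i + 1) • of a)
    rw [h.succ_smul_of hi]

lemma mem_bottomSubgroup_of_smul_eq (h : IsArtinChain a s (N + 1)) {g : G}
    (hg : g ∈ Subgroup.closure (s '' Set.Iio (N + 1))) (hgf : ∀ f : FreeGroup ℤ, g • f = f) :
    g ∈ IsBraidChain.bottomSubgroup s N := by
  obtain ⟨d, hd, u, hu, rfl⟩ := h.exists_eq_mul_rangeProd hg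
  have hconj : IsConj (of a : FreeGroup ℤ) (of (a + d)) := by
    rw [← hgf (of (a + d)), mul_smul]
    exact (h.isConj_smul_of_mem_bottomSubgroup hu).trans
      ((MulDistribMulAction.toMonoidHom _ u).map_isConj (h.isConj_rangeProd_smul hd))
  obtain rfl : d = 0 := by simpa using eq_of_isConj_of hconj
  simpa using hu

/-- Artin's theorem on the faithfulness of the braid action; the induction removes the bottom
strand. -/
theorem eq_one_of_smul_eq (h : IsArtinChain a s N) {g : G}
    (hg : g ∈ Subgroup.closure (s '' Set.Iio N)) (hgf : ∀ f : FreeGroup ℤ, g • f = f) :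
    g = 1 := by
  induction N generalizing a s with
  | zero => simpa using hg
  | succ N ih =>
    refine ih h.tail (IsTypeBChain.mem_closure_of_smul_eq h.isTypeBChain_tail
      (φ := MonoidHom.id _) (κ := truncate (Set.Icc (a + 1) (a + 1 + N))) (hφ := fun _ _ => rfl)
      (c := of a) (x := fun d => of (a + 1 + d)) (fun i hi => h.tail.truncate_smul hi)
      (fun i hi => h.succ_smul_of hi) ?_ (fun i hi => ?_) ?_ (fun p hp => ?_)
      (h.mem_bottomSubgroup_of_smul_eq hg hgf) (hgf _))
    · exact ⟨h.truncate_sq_smul, of (a + 1), h.sq_smul_of, by simp [truncate_of_mem]⟩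
    · simpa [add_assoc] using h.tail.smul_of_self hi
    · exact lift_of_comp_injective fun i j hij => Subtype.ext (by simpa using hij)
    · refine truncate_eq_one_of_commute (b := a) (by simp) ?_
      rw [mul_assoc, inv_mul_eq_iff_eq_mul] at hp
      exact hp.symm

end IsArtinChain

end ArtinChain

section PeriodicLift

open FreeGroup (of lift)

/-- The endomorphism `x_j ↦ x_{j+m}` of the free group on `x_j`, `j ∈ ℤ`. -/
def shiftHom (m : ℕ) : FreeGroup ℤ →* FreeGroup ℤ := FreeGroup.map (· + (m : ℤ))

@[simp] lemma shiftHom_of (m : ℕ) (j : ℤ) : shiftHom m (of j) = of (j + m) := FreeGroup.map.of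

/-- The homomorphism from the free group on `x_j`, `j ∈ ℤ`, that sends `x_j` to `y j` for
`0 ≤ j < m` and turns the shift by `m` into conjugation by `c⁻¹`. -/
def periodicLift {H : Type*} [Group H] (m : ℕ) (c : H) (y : ℤ → H) : FreeGroup ℤ →* H :=
  lift fun j => c ^ (-(j / m)) * y (j % m) * c ^ (j / m)

variable {H : Type*} [Group H] {m : ℕ} {c : H} {y : ℤ → H}

lemma periodicLift_of {j : ℤ} (hj : 0 ≤ j) (hjm : j < m) : periodicLift m c y (of j) = y j := by
  simp [periodicLift, Int.ediv_eq_zero_of_lt hj hjm, Int.emod_eq_of_lt hj hjm]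

lemma periodicLift_shiftHom (hm : 0 < m) (f : FreeGroup ℤ) :
    periodicLift m c y (shiftHom m f) = c⁻¹ * periodicLift m c y f * c := by
  suffices h : (periodicLift m c y).comp (shiftHom m) =
      (MulAut.conj c⁻¹).toMonoidHom.comp (periodicLift m c y) by
    simpa using DFunLike.congr_fun h f
  ext j
  simp [periodicLift, Int.add_ediv_of_dvd_right, Int.ediv_self (by omega : (m : ℤ) ≠ 0), zpow_add,
    mul_assoc]

lemma map_periodicLift {H' : Type*} [Group H'] (g : H →* H') (f : FreeGroup ℤ) :
    g (periodicLift m c y f) = periodicLift m (g c) (fun j => g (y j)) f := by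
  suffices h : g.comp (periodicLift m c y) = periodicLift m (g c) fun j => g (y j) from
    DFunLike.congr_fun h f
  ext j
  simp [periodicLift]

lemma hom_ext_of_shiftHom (hm : 0 < m) {α β : FreeGroup ℤ →* H}
    (hα : ∀ f, α (shiftHom m f) = c⁻¹ * α f * c) (hβ : ∀ f, β (shiftHom m f) = c⁻¹ * β f * c)
    (h : ∀ j : ℕ, j < m → α (of (j : ℤ)) = β (of (j : ℤ))) : α = β := by
  have shift (j : ℤ) : α (of (j + m)) = β (of (j + m)) ↔ α (of j) = β (of j) := by
    rw [← shiftHom_of, hα, hβ]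
    simp
  have shift_mul (j k : ℤ) : α (of (j + m * k)) = β (of (j + m * k)) ↔ α (of j) = β (of j) := by
    induction k with
    | zero => simp
    | succ k ih => rw [mul_add, mul_one, ← add_assoc, shift, ih]
    | pred k ih =>
      rw [← shift, ← ih]
      ring_nf
  ext j
  obtain ⟨r, hr⟩ := Int.eq_ofNat_of_zero_le (Int.emod_nonneg j (by omega : (m : ℤ) ≠ 0))
  have hlt := Int.emod_lt_of_pos j (by omega : (0 : ℤ) < m)
  rw [← Int.emod_add_mul_ediv j m, shift_mul, hr]
  exact h r (by omega)

lemma periodicLift_smul {G : Type*} [Group G] [MulDistribMulAction G (FreeGroup ℤ)]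
    [MulDistribMulAction G H] (hm : 0 < m) {g g' : G}
    (hg : ∀ f : FreeGroup ℤ, g • shiftHom m f = shiftHom m (g • f)) (hc : g' • c = c)
    (h : ∀ j : ℕ, j < m → periodicLift m c y (g • of (j : ℤ)) = g' • y j) (f : FreeGroup ℤ) :
    periodicLift m c y (g • f) = g' • periodicLift m c y f := by
  suffices heq : (periodicLift m c y).comp (MulDistribMulAction.toMonoidHom _ g) =
      (MulDistribMulAction.toMonoidHom _ g').comp (periodicLift m c y) from DFunLike.congr_fun heq f
  refine hom_ext_of_shiftHom (c := c) hm (fun f => ?_) (fun f => ?_) fun j hj => ?_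
  · simp only [MonoidHom.comp_apply, MulDistribMulAction.toMonoidHom_apply, hg,
      periodicLift_shiftHom hm]
  · simp only [MonoidHom.comp_apply, MulDistribMulAction.toMonoidHom_apply,
      periodicLift_shiftHom hm, smul_mul', smul_inv', hc]
  · have hval : periodicLift m c y (of (j : ℤ)) = y j := periodicLift_of (by omega) (by omega)
    simp only [MonoidHom.comp_apply, MulDistribMulAction.toMonoidHom_apply, h j hj, hval]

end PeriodicLift

section Boundary

open FreeGroup (of)
open RegularWreathProduct (inl)

lemma semiconjBy_rangeProd_of_forall {G : Type*} [Group G] {w : G} {q q' : ℕ → G} {d : ℕ}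
    (h : ∀ i < d, SemiconjBy w (q i) (q' i)) :
    SemiconjBy w (rangeProd q d) (rangeProd q' d) := by
  induction d with
  | zero => exact SemiconjBy.one_right w
  | succ d ih =>
    rw [rangeProd_succ, rangeProd_succ]
    exact (ih fun i hi => h i (by omega)).mul_right (h d (by omega))

lemma map_rangeProd_eq {G H : Type*} [Group G] [Group H] (g : G →* H) {q : ℕ → G} {q' : ℕ → H}
    {d : ℕ} (h : ∀ i < d, g (q i) = q' i) : g (rangeProd q d) = rangeProd q' d := by
  induction d with
  | zero => exact map_one g
  | succ d ih =>
    rw [rangeProd_succ, rangeProd_succ, map_mul, h d (by omega), ih fun i hi => h i (by omega)]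

lemma smul_rangeProd_eq {G X : Type*} [Group G] [Group X] [MulDistribMulAction G X] (g : G)
    {q q' : ℕ → X} {d : ℕ} (h : ∀ i < d, g • q i = q' i) : g • rangeProd q d = rangeProd q' d :=
  map_rangeProd_eq (MulDistribMulAction.toMonoidHom X g) h

/-- The product `x_a x_{a+1} ⋯ x_{a+n-1}`, which represents a loop around `n` punctures. -/
def boundary (a : ℤ) (n : ℕ) : FreeGroup ℤ := rangeProd (fun i => of (a + i)) n

lemma boundary_succ (a : ℤ) (n : ℕ) : boundary a (n + 1) = boundary a n * of (a + n) :=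
  rangeProd_succ _ n

lemma boundary_succ' (a : ℤ) (n : ℕ) : boundary a (n + 1) = of a * boundary (a + 1) n := by
  simp [boundary, rangeProd_succ', add_assoc, add_comm (1 : ℤ)]

lemma periodicLift_boundary {H : Type*} [Group H] {m : ℕ} {c : H} (g : FreeGroup ℤ →* H) :
    periodicLift m c (fun j => g (of j)) (boundary 0 m) = g (boundary 0 m) := by
  rw [boundary, map_rangeProd_eq g fun _ _ => rfl]
  exact map_rangeProd_eq _ fun i hi => periodicLift_of (by omega) (by omega)

-- Lifting to the lamplighter group, with the lamp switched in each period, turns the hypothesis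
-- into the commutation of the lift of `f` with the lamp.
lemma periodicLift_eq_one_of_twisted_conj {m : ℕ} (hm : 0 < m) {f : FreeGroup ℤ}
    (hf : f⁻¹ * boundary 0 m * shiftHom m f = boundary 0 m) :
    periodicLift m (boundary 0 m) of f = 1 := by
  let c := boundary 0 m
  let Θ := periodicLift m (lamp (FreeGroup ℤ) * inl c) fun j => inl (of j)
  have hright : (Θ f).right = periodicLift m c of f := by
    rw [← RegularWreathProduct.rightHom_eq_right, map_periodicLift]
    simp
  have hcomm : Commute (Θ f) (lamp _) := by
    have hΘ := congrArg Θ hf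
    rw [map_mul, map_mul, map_inv, periodicLift_shiftHom hm, periodicLift_boundary inl] at hΘ
    change (Θ f)⁻¹ * inl c * ((lamp _ * inl c)⁻¹ * Θ f * (lamp _ * inl c)) = inl c at hΘ
    have : (Θ f)⁻¹ * (lamp _)⁻¹ * Θ f * lamp _ = 1 := by
      rw [← mul_eq_right (b := inl c)]
      exact Eq.trans (by group) hΘ
    rwa [← mul_inv_rev, mul_assoc, inv_mul_eq_one, eq_comm] at this
  rw [← hright]
  exact right_eq_one_of_commute_lamp hcomm

end Boundary

namespace IsArtinChain

open FreeGroup (of)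

variable {G : Type*} [Group G] [MulDistribMulAction G (FreeGroup ℤ)] {a : ℤ} {s : ℕ → G}
  {N i : ℕ}

lemma smul_boundary (h : IsArtinChain a s N) (hi : i < N) :
    s i • boundary a (N + 1) = boundary a (N + 1) := by
  suffices hfix : ∀ d, i + 2 ≤ d → d ≤ N + 1 → s i • boundary a d = boundary a d from
    hfix _ (by omega) le_rfl
  intro d hd
  induction d, hd using Nat.le_induction with
  | base =>
    intro _
    have hlow : s i • boundary a i = boundary a i :=
      smul_rangeProd_eq _ fun j hj =>
        h.smul_of_of_ne hi (by omega) (by omega) (by omega) (by omega)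
    rw [boundary_succ, boundary_succ, smul_mul', smul_mul', hlow, h.smul_of_self hi,
      Nat.cast_add_one, ← add_assoc, h.smul_of_succ hi]
    group
  | succ d hd ih =>
    intro hdN
    rw [boundary_succ, smul_mul', ih (by omega),
      h.smul_of_of_ne hi (by omega) (by omega) (by omega) (by omega)]

lemma rangeProd_smul_boundary (h : IsArtinChain a s N) {d : ℕ} (hd : d ≤ N) :
    rangeProd s d • boundary a (N + 1) = boundary a (N + 1) := by
  induction d with
  | zero => exact one_smul G _
  | succ d ih => rw [rangeProd_succ, mul_smul, h.smul_boundary hd, ih (by omega)]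

lemma rangeProd_smul_of_lt (h : IsArtinChain a s N) {d : ℕ} (hd : d < i) (hi : i ≤ N) :
    rangeProd s d • of (a + i) = (of (a + i) : FreeGroup ℤ) := by
  induction d with
  | zero => exact one_smul G _
  | succ d ih =>
    rw [rangeProd_succ, mul_smul,
      h.smul_of_of_ne (by omega) (by omega) (by omega) (by omega) (by omega), ih (by omega)]

lemma rangeProd_smul_of (h : IsArtinChain a s N) {d : ℕ} (hi : i < d) (hd : d ≤ N) :
    rangeProd s d • of (a + i) = (of (a + i + 1) : FreeGroup ℤ) := by
  induction d, hi using Nat.le_induction with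
  | base =>
    have hfix := h.rangeProd_smul_of_lt (Nat.lt_succ_self i) hd
    rw [Nat.cast_succ, ← add_assoc] at hfix
    rw [rangeProd_succ, mul_smul, h.smul_of_self hd, hfix]
  | succ d hid ih =>
    rw [rangeProd_succ, mul_smul,
      h.smul_of_of_ne (by omega) (by omega) (by omega) (by omega) (by omega), ih (by omega)]

lemma rangeProd_smul_of_last (h : IsArtinChain a s N) :
    rangeProd s N • of (a + N) =
      (boundary a (N + 1))⁻¹ * of a * boundary a (N + 1) := by
  have hshift : rangeProd s N • boundary a N = boundary (a + 1) N :=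
    smul_rangeProd_eq _ fun i hi => by rw [h.rangeProd_smul_of hi le_rfl, add_right_comm]
  have hfix := h.rangeProd_smul_boundary le_rfl
  rw [boundary_succ, smul_mul', hshift, ← boundary_succ, ← eq_inv_mul_iff_mul_eq] at hfix
  rw [hfix]
  nth_rw 2 [boundary_succ']
  group

end IsArtinChain

section AffineChain

open FreeGroup (of)

/-- The elements `s i`, which only depend on `i` modulo `K + 2`, satisfy the affine braid relations
and act by half twists, while `τ` rotates both the `s i` and the free generators `x_j`; together
they generate the group. -/
structure IsAffineChain {G : Type*} [Group G] [MulDistribMulAction G (FreeGroup ℤ)] (s : ℕ → G)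
    (τ : G) (K : ℕ) : Prop extends IsArtinChain 0 s (K + 1) where
  rotate : ∀ i, SemiconjBy τ (s i) (s (i + 1))
  periodic : ∀ i, s (i + (K + 2)) = s i
  rotate_of : ∀ j, τ • of j = (of (j + 1) : FreeGroup ℤ)
  closure_eq_top : Subgroup.closure (insert τ (Set.range s)) = ⊤

namespace IsAffineChain

variable {G : Type*} [Group G] [MulDistribMulAction G (FreeGroup ℤ)] {s : ℕ → G} {τ : G} {K i : ℕ}

lemma semiconjBy_pow (h : IsAffineChain s τ K) (n i : ℕ) :
    SemiconjBy (τ ^ n) (s i) (s (i + n)) := by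
  induction n with
  | zero => exact (pow_zero τ).symm ▸ SemiconjBy.one_left _
  | succ n ih => exact pow_succ' τ n ▸ (h.rotate (i + n)).mul_left ih

lemma pow_smul (h : IsAffineChain s τ K) (n : ℕ) (f : FreeGroup ℤ) :
    τ ^ n • f = shiftHom n f := by
  suffices heq : MulDistribMulAction.toMonoidHom (FreeGroup ℤ) (τ ^ n) = shiftHom n from
    DFunLike.congr_fun heq f
  ext j
  rw [shiftHom_of, MulDistribMulAction.toMonoidHom_apply]
  induction n with
  | zero => simp
  | succ n ih => rw [pow_succ', mul_smul, ih, h.rotate_of, Nat.cast_succ, add_assoc]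

lemma pow_mem_center (h : IsAffineChain s τ K) : τ ^ (K + 2) ∈ Subgroup.center G := by
  rw [← Subgroup.centralizer_univ, ← Subgroup.coe_top, ← h.closure_eq_top,
    Subgroup.centralizer_closure, Subgroup.mem_centralizer_iff]
  rintro _ (rfl | ⟨i, rfl⟩)
  · exact ((Commute.refl _).pow_right _).eq
  · have := (h.semiconjBy_pow (K + 2) i).eq
    rwa [h.periodic, eq_comm] at this

lemma smul_shiftHom (h : IsAffineChain s τ K) (g : G) (f : FreeGroup ℤ) :
    g • shiftHom (K + 2) f = shiftHom (K + 2) (g • f) := by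
  rw [← h.pow_smul, ← h.pow_smul, smul_smul, smul_smul,
    Subgroup.mem_center_iff.1 h.pow_mem_center g]

-- In the braid group of the annulus, `τ * (rangeProd s (K + 1))⁻¹` moves one strand once around.
lemma isTypeBChain (h : IsAffineChain s τ K) :
    IsTypeBChain s (τ * (rangeProd s (K + 1))⁻¹) (K + 1) where
  toIsBraidChain := h.toIsBraidChain
  quartic _ := by
    set b := τ * (rangeProd s (K + 1))⁻¹
    set e := rangeProd s K
    set δ' := rangeProd (fun i => s (i + 1)) K
    have hb : b * s 0 = τ * δ'⁻¹ := by
      rw [mul_assoc, rangeProd_succ', mul_inv_rev, inv_mul_cancel_right]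
    have hδ : SemiconjBy (δ' * e) (s K) (s 0) := by
      have hshift : SemiconjBy (rangeProd s (K + 1)) e δ' :=
        semiconjBy_rangeProd_of_forall fun i hi => h.semiconjBy_rangeProd (by omega) le_rfl
      rw [SemiconjBy, mul_assoc, ← rangeProd_succ, ← hshift.eq, rangeProd_succ', mul_assoc]
    have hτ : SemiconjBy (τ * τ) (s K) (s 0) := by
      rw [← h.periodic 0, zero_add]
      exact (h.rotate (K + 1)).mul_left (h.rotate K)
    have hrot : SemiconjBy τ e δ' := semiconjBy_rangeProd_of_forall fun i _ => h.rotate i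
    have hsq : b * s 0 * (b * s 0) = τ * τ * (δ' * e)⁻¹ := by
      rw [hb, ← mul_inv_eq_iff_eq_mul.2 hrot.eq]
      group
    have hcomm : Commute (b * s 0 * (b * s 0)) (s 0) :=
      hsq ▸ hτ.mul_left hδ.inv_symm_left
    refine mul_right_cancel (b := s 0) ?_
    simpa only [mul_assoc] using hcomm.eq.symm
  comm_end i hi hiK := by
    obtain ⟨i, rfl⟩ := Nat.exists_eq_add_one_of_ne_zero hi.ne'
    exact (h.rotate i).mul_left (h.semiconjBy_rangeProd (by omega) le_rfl).inv_symm_left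

lemma closure_typeB_eq_top (h : IsAffineChain s τ K) :
    Subgroup.closure (insert (τ * (rangeProd s (K + 1))⁻¹) (s '' Set.Iio (K + 1))) = ⊤ := by
  set B := Subgroup.closure (insert (τ * (rangeProd s (K + 1))⁻¹) (s '' Set.Iio (K + 1)))
  have hs {i : ℕ} (hi : i < K + 1) : s i ∈ B := Subgroup.subset_closure (Or.inr ⟨i, hi, rfl⟩)
  have hδ : rangeProd s (K + 1) ∈ B := by
    refine Subgroup.list_prod_mem _ fun y hy => ?_
    obtain ⟨i, hi, rfl⟩ := List.mem_map.1 hy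
    exact hs (List.mem_range.1 hi)
  have hτ : τ ∈ B :=
    (mul_mem_cancel_right (inv_mem hδ)).1 (Subgroup.subset_closure (Set.mem_insert _ _))
  rw [eq_top_iff, ← h.closure_eq_top, Subgroup.closure_le]
  rintro _ (rfl | ⟨i, rfl⟩)
  · exact hτ
  induction i with
  | zero => exact hs (by omega)
  | succ i ih =>
    rw [← mul_inv_eq_iff_eq_mul.2 (h.rotate i).eq]
    exact mul_mem (mul_mem hτ ih) (inv_mem hτ)

lemma periodicLift_smul_chain (h : IsAffineChain s τ K) (hi : i < K + 1) (f : FreeGroup ℤ) :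
    periodicLift (K + 2) (boundary 0 (K + 2)) of (s i • f) =
      s i • periodicLift (K + 2) (boundary 0 (K + 2)) of f := by
  have hself := h.smul_of_self hi
  have hsucc := h.smul_of_succ hi
  rw [zero_add] at hself hsucc
  refine periodicLift_smul (by omega) (h.smul_shiftHom _) (h.smul_boundary hi) (fun j hj => ?_) f
  have hof : periodicLift (K + 2) (boundary 0 (K + 2)) of (of (i : ℤ)) = of (i : ℤ) :=
    periodicLift_of (by omega) (by omega)
  have hof_succ : periodicLift (K + 2) (boundary 0 (K + 2)) of (of (i + 1 : ℤ)) = of (i + 1 : ℤ) :=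
    periodicLift_of (by omega) (by omega)
  obtain rfl | hji := eq_or_ne j i
  · rw [hself, hof_succ]
  obtain rfl | hji' := eq_or_ne j (i + 1)
  · rw [Nat.cast_succ, hsucc]
    simp only [map_mul, map_inv, hof, hof_succ]
  · rw [h.smul_of_of_ne hi (by omega) (by omega) (by omega) (by omega),
      periodicLift_of (by omega) (by omega)]

lemma periodicLift_smul_rangeProd (h : IsAffineChain s τ K) {d : ℕ} (hd : d ≤ K + 1)
    (f : FreeGroup ℤ) : periodicLift (K + 2) (boundary 0 (K + 2)) of (rangeProd s d • f) =
      rangeProd s d • periodicLift (K + 2) (boundary 0 (K + 2)) of f := by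
  induction d generalizing f with
  | zero => simp
  | succ d ih =>
    rw [rangeProd_succ, mul_smul, mul_smul, ih (by omega), h.periodicLift_smul_chain hd]

lemma periodicLift_smul_rotate (h : IsAffineChain s τ K) (f : FreeGroup ℤ) :
    periodicLift (K + 2) (boundary 0 (K + 2)) of (τ • f) =
      rangeProd s (K + 1) • periodicLift (K + 2) (boundary 0 (K + 2)) of f := by
  refine periodicLift_smul (by omega) (h.smul_shiftHom _) (h.rangeProd_smul_boundary le_rfl)
    (fun j hj => ?_) f
  rw [h.rotate_of]
  obtain hlt | rfl := Nat.lt_succ_iff_lt_or_eq.1 hj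
  · have hshift := h.rangeProd_smul_of hlt le_rfl
    rw [zero_add] at hshift
    rw [hshift, periodicLift_of (by omega) (by omega)]
  · have hlast := h.rangeProd_smul_of_last
    rw [zero_add] at hlast
    have hof : of ((K + 1 : ℕ) + 1 : ℤ) = shiftHom (K + 2) (of 0) := by
      rw [shiftHom_of]
      congr 1
      push_cast
      ring
    rw [hlast, hof, periodicLift_shiftHom (by omega), periodicLift_of le_rfl (by omega)]

lemma rotate_boundary (h : IsAffineChain s τ K) :
    τ • boundary 0 (K + 2) = (of 0)⁻¹ * boundary 0 (K + 2) * shiftHom (K + 2) (of 0) := by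
  have hshift : τ • boundary 0 (K + 2) = boundary (0 + 1) (K + 2) :=
    smul_rangeProd_eq τ fun i _ => by rw [h.rotate_of, add_right_comm]
  rw [hshift, shiftHom_of, mul_assoc, ← boundary_succ, boundary_succ' 0, inv_mul_cancel_left]

lemma mem_twistSubgroup (h : IsAffineChain s τ K) :
    (τ * (rangeProd s (K + 1))⁻¹, of 0) ∈ twistSubgroup (shiftHom (K + 2))
      (periodicLift (K + 2) (boundary 0 (K + 2)) of) h.smul_shiftHom (boundary 0 (K + 2)) := by
  refine ⟨fun f => ?_, of 0, ?_, periodicLift_of le_rfl (by omega)⟩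
  · dsimp only
    rw [mul_smul, h.periodicLift_smul_rotate, ← h.periodicLift_smul_rangeProd le_rfl,
      smul_inv_smul]
  · dsimp only
    rw [mul_smul, inv_smul_eq_iff.2 (h.rangeProd_smul_boundary le_rfl).symm, h.rotate_boundary]

theorem eq_one_of_smul_eq (h : IsAffineChain s τ K) {g : G} (hg : ∀ f : FreeGroup ℤ, g • f = f) :
    g = 1 := by
  refine h.toIsArtinChain.eq_one_of_smul_eq ?_ hg
  refine h.isTypeBChain.mem_closure_of_smul_eq (x := fun d => of (d : ℤ))
    (fun i hi => h.periodicLift_smul_chain hi) (fun i hi => h.smul_boundary hi)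
    h.mem_twistSubgroup (fun i hi => ?_) ?_
    (fun p => periodicLift_eq_one_of_twisted_conj (by omega)) ?_ (hg _)
  · simpa using h.smul_of_self hi
  · exact lift_of_comp_injective fun i j hij => Subtype.ext (by simpa using hij)
  · exact h.closure_typeB_eq_top ▸ Subgroup.mem_top g

end IsAffineChain

end AffineChain

section AffineBraidGroup

lemma affineBraidGen_braid {n : ℕ} (hn : 2 < n) (i : ZMod n) :
    affineBraidGen n i * affineBraidGen n (i + 1) * affineBraidGen n i =
      affineBraidGen n (i + 1) * affineBraidGen n i * affineBraidGen n (i + 1) := by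
  have hmem : braidRelWord i (i + 1) ∈ affineBraidRels n := by
    rw [affineBraidRels, if_neg hn.not_ge]
    exact .inl ⟨i, rfl⟩
  have hrel := PresentedGroup.one_of_mem hmem
  rwa [braidRelWord, map_mul, map_inv, mul_inv_eq_one] at hrel

lemma affineBraidGen_commute {n : ℕ} (hn : 2 < n) {i j : ZMod n} (h : i - j ≠ 1)
    (h' : i - j ≠ -1) : Commute (affineBraidGen n i) (affineBraidGen n j) := by
  have hmem : commRelWord i j ∈ affineBraidRels n := by
    rw [affineBraidRels, if_neg hn.not_ge]
    exact .inr ⟨i, j, h, h', rfl⟩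
  have hrel := PresentedGroup.one_of_mem hmem
  rwa [commRelWord, map_mul, map_inv, mul_inv_eq_one] at hrel

lemma closure_range_affineBraidGen (n : ℕ) :
    Subgroup.closure (Set.range (affineBraidGen n)) = ⊤ :=
  PresentedGroup.closure_range_of _

/-- The universal property of the affine braid group: a family of elements of a group satisfying
the affine braid relations extends to a homomorphism. -/
def affineBraidLift {n : ℕ} {H : Type*} [Group H] (f : ZMod n → H)
    (hbraid : 2 < n → ∀ i, f i * f (i + 1) * f i = f (i + 1) * f i * f (i + 1))
    (hcomm : 2 < n → ∀ i j, i - j ≠ 1 → i - j ≠ -1 → Commute (f i) (f j)) :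
    AffineBraidGroup n →* H :=
  PresentedGroup.toGroup (f := f) (by
    intro r hr
    rw [affineBraidRels] at hr
    split_ifs at hr with hn
    · exact absurd hr (Set.notMem_empty r)
    rcases hr with ⟨i, rfl⟩ | ⟨i, j, h, h', rfl⟩
    · rw [braidRelWord, map_mul, map_inv, mul_inv_eq_one]
      simpa using hbraid (not_le.1 hn) i
    · rw [commRelWord, map_mul, map_inv, mul_inv_eq_one]
      simpa using (hcomm (not_le.1 hn) i j h h').eq)

section Lift

variable {n : ℕ} {H : Type*} [Group H]

@[simp] lemma affineBraidLift_gen {f : ZMod n → H} {hbraid hcomm} (i : ZMod n) :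
    affineBraidLift f hbraid hcomm (affineBraidGen n i) = f i :=
  PresentedGroup.toGroup.of _

lemma affineBraid_hom_ext {f g : AffineBraidGroup n →* H}
    (h : ∀ i, f (affineBraidGen n i) = g (affineBraidGen n i)) : f = g :=
  PresentedGroup.ext h

end Lift

lemma intCast_zmod_ne_zero {n : ℕ} {k : ℤ} (hk : k ≠ 0) (hkn : |k| < n) : (k : ZMod n) ≠ 0 :=
  fun h => hk (Int.eq_zero_of_abs_lt_dvd ((ZMod.intCast_zmod_eq_zero_iff_dvd k n).1 h) hkn)

instance (n : ℕ) [n.AtLeastTwo] : Nontrivial (ZMod n) :=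
  ZMod.nontrivial_iff.2 Nat.AtLeastTwo.ne_one

/-- The set of integers in a residue class modulo `n`. -/
def residueSet (n : ℕ) (i : ZMod n) : Set ℤ := {j | (j : ZMod n) = i}

@[simp] lemma mem_residueSet {n : ℕ} {i : ZMod n} {j : ℤ} :
    j ∈ residueSet n i ↔ (j : ZMod n) = i := Iff.rfl

lemma disjoint_residueSet {n : ℕ} {i j : ZMod n} (hij : i ≠ j) :
    Disjoint (residueSet n i) (residueSet n j) :=
  Set.disjoint_left.2 fun _ hi hj => hij (hi.symm.trans hj)

lemma isSparse_residueSet (n : ℕ) [Nontrivial (ZMod n)] (i : ZMod n) :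
    IsSparse (residueSet n i) := by
  rintro j rfl
  simp

lemma isSparse_residueSet_union {n : ℕ} [Nontrivial (ZMod n)] {i j : ZMod n} (h : i - j ≠ 1)
    (h' : i - j ≠ -1) : IsSparse (residueSet n i ∪ residueSet n j) := by
  rintro k (rfl | rfl) hk
  · refine hk.elim (isSparse_residueSet n _ k rfl) fun hj => h' ?_
    rw [← mem_residueSet.1 hj]
    simp
  · refine hk.elim (fun hi => h ?_) (isSparse_residueSet n _ k rfl)
    rw [← mem_residueSet.1 hi]
    simp

/-- The action of the affine braid group on the free group on `x_j`, `j ∈ ℤ`, in which `s_i` acts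
by half twists at all the integers congruent to `i`. -/
noncomputable def affineAction (n : ℕ) [n.AtLeastTwo] :
    AffineBraidGroup n →* MulAut (FreeGroup ℤ) :=
  affineBraidLift (fun i => halfTwists (residueSet n i) (isSparse_residueSet n i))
    (fun hn i => by
      refine halfTwists_braid _ (fun j => by simp) ?_
      rintro j rfl
      simpa using intCast_zmod_ne_zero two_ne_zero (by simpa using hn))
    (fun _ i j h h' => by
      obtain rfl | hij := eq_or_ne i j
      · exact Commute.refl _
      · exact halfTwists_commute _ (isSparse_residueSet_union h h') (disjoint_residueSet hij))

lemma affineAction_gen (n : ℕ) [n.AtLeastTwo] (i : ZMod n) :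
    affineAction n (affineBraidGen n i) = halfTwists (residueSet n i) (isSparse_residueSet n i) :=
  affineBraidLift_gen i

end AffineBraidGroup

section ExtendedAffineBraidGroup

open FreeGroup (of)

/-- The endomorphism `s_i ↦ s_{i + k}` of the affine braid group. -/
def affineBraidTranslate (n : ℕ) (k : ZMod n) : AffineBraidGroup n →* AffineBraidGroup n :=
  affineBraidLift (fun i => affineBraidGen n (i + k))
    (fun hn i => by
      rw [add_right_comm]
      exact affineBraidGen_braid hn _)
    (fun hn i j h h' => affineBraidGen_commute hn (by simpa using h) (by simpa using h'))

/-- The automorphism `s_i ↦ s_{i + 1}` of the affine braid group. -/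
def affineBraidRotate (n : ℕ) : MulAut (AffineBraidGroup n) :=
  MonoidHom.toMulEquiv (affineBraidTranslate n 1) (affineBraidTranslate n (-1))
    (affineBraid_hom_ext fun i => by simp [affineBraidTranslate])
    (affineBraid_hom_ext fun i => by simp [affineBraidTranslate])

lemma affineBraidRotate_gen (n : ℕ) (i : ZMod n) :
    affineBraidRotate n (affineBraidGen n i) = affineBraidGen n (i + 1) := by
  change affineBraidTranslate n 1 (affineBraidGen n i) = _
  rw [affineBraidTranslate, affineBraidLift_gen]

/-- The automorphism `x_j ↦ x_{j + 1}` of the free group on `x_j`, `j ∈ ℤ`. -/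
def freeShift : MulAut (FreeGroup ℤ) := FreeGroup.freeGroupCongr (Equiv.addRight 1)

lemma freeShift_of (j : ℤ) : freeShift (of j) = of (j + 1) := by simp [freeShift]

lemma freeShift_mul_halfTwists {T T' : Set ℤ} (hT : IsSparse T) (hT' : IsSparse T')
    (hsucc : ∀ j, j + 1 ∈ T' ↔ j ∈ T) :
    freeShift * halfTwists T hT = halfTwists T' hT' * freeShift := by
  refine mulAut_freeGroup_ext fun j => ?_
  simp only [MulAut.mul_apply, freeShift_of]
  by_cases hj : j ∈ T
  · rw [halfTwists_of_mem hj, halfTwists_of_mem ((hsucc j).2 hj), freeShift_of]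
  by_cases hj' : j - 1 ∈ T
  · obtain ⟨i, rfl⟩ : ∃ i, j = i + 1 := ⟨j - 1, by ring⟩
    rw [add_sub_cancel_right] at hj'
    rw [halfTwists_of_add_one hj', halfTwists_of_add_one ((hsucc i).2 hj')]
    simp only [map_mul, map_inv, freeShift_of]
  · rw [halfTwists_of_notMem hj hj', freeShift_of, halfTwists_of_notMem (by rwa [hsucc])]
    rwa [add_sub_right_comm, hsucc]

lemma affineAction_rotate (n : ℕ) [n.AtLeastTwo] (x : AffineBraidGroup n) :
    affineAction n (affineBraidRotate n x) = freeShift * affineAction n x * freeShift⁻¹ := by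
  suffices heq : (affineAction n).comp (affineBraidRotate n).toMonoidHom =
      (MulAut.conj freeShift).toMonoidHom.comp (affineAction n) from DFunLike.congr_fun heq x
  refine affineBraid_hom_ext fun i => ?_
  change affineAction n (affineBraidRotate n (affineBraidGen n i)) =
    freeShift * affineAction n (affineBraidGen n i) * freeShift⁻¹
  rw [affineBraidRotate_gen, affineAction_gen, affineAction_gen, eq_mul_inv_iff_mul_eq]
  exact (freeShift_mul_halfTwists _ _ fun j => by simp).symm

lemma map_zpow_apply_eq_conj {A B : Type*} [Group A] [Group B] {f : A →* B} {a : MulAut A} {u : B}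
    (h : ∀ x, f (a x) = u * f x * u⁻¹) (k : ℤ) (x : A) :
    f ((a ^ k) x) = u ^ k * f x * (u ^ k)⁻¹ := by
  induction k generalizing x with
  | zero => simp
  | succ k ih =>
    rw [zpow_add_one, MulAut.mul_apply, ih, h, zpow_add_one]
    group
  | pred k ih =>
    have hx := h (a⁻¹ x)
    rw [MulAut.apply_inv_self] at hx
    rw [zpow_sub_one, MulAut.mul_apply, ih, zpow_sub_one, hx]
    group

/-- The extended affine braid group: the infinite cyclic group acts by `s_i ↦ s_{i + 1}`. -/
abbrev ExtendedAffineBraidGroup (n : ℕ) :=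
  AffineBraidGroup n ⋊[zpowersHom (MulAut (AffineBraidGroup n)) (affineBraidRotate n)]
    Multiplicative ℤ

/-- The generator `τ` of the extended affine braid group with `τ s_i τ⁻¹ = s_{i + 1}`. -/
def extendedRotation (n : ℕ) : ExtendedAffineBraidGroup n :=
  SemidirectProduct.inr (Multiplicative.ofAdd 1)

/-- The extension of `affineAction` in which the rotation `τ` acts by `x_j ↦ x_{j + 1}`. -/
noncomputable def extendedAction (n : ℕ) [n.AtLeastTwo] :
    ExtendedAffineBraidGroup n →* MulAut (FreeGroup ℤ) :=
  SemidirectProduct.lift (affineAction n) (zpowersHom _ freeShift) fun k =>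
    MonoidHom.ext fun x => map_zpow_apply_eq_conj (affineAction_rotate n) k.toAdd x

noncomputable instance (n : ℕ) [n.AtLeastTwo] :
    MulDistribMulAction (ExtendedAffineBraidGroup n) (FreeGroup ℤ) :=
  .compHom _ (extendedAction n)

lemma inl_smul (n : ℕ) [n.AtLeastTwo] (g : AffineBraidGroup n) (f : FreeGroup ℤ) :
    (SemidirectProduct.inl g : ExtendedAffineBraidGroup n) • f = affineAction n g f := by
  change extendedAction n (SemidirectProduct.inl g) f = _
  rw [extendedAction, SemidirectProduct.lift_inl]

lemma extendedRotation_smul_of (n : ℕ) [n.AtLeastTwo] (j : ℤ) :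
    extendedRotation n • of j = (of (j + 1) : FreeGroup ℤ) := by
  change extendedAction n (extendedRotation n) (of j) = _
  rw [extendedAction, extendedRotation, SemidirectProduct.lift_inr, zpowersHom_apply, toAdd_ofAdd,
    zpow_one, freeShift_of]

lemma extendedRotation_semiconjBy (n : ℕ) (i : ZMod n) :
    SemiconjBy (extendedRotation n) (SemidirectProduct.inl (affineBraidGen n i))
      (SemidirectProduct.inl (affineBraidGen n (i + 1))) := by
  have hconj := SemidirectProduct.inl_aut
    (φ := zpowersHom (MulAut (AffineBraidGroup n)) (affineBraidRotate n))
    (Multiplicative.ofAdd 1) (affineBraidGen n i)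
  rw [zpowersHom_apply, toAdd_ofAdd, zpow_one, affineBraidRotate_gen, map_inv,
    eq_mul_inv_iff_mul_eq] at hconj
  exact hconj.symm

lemma closure_extendedAffineBraidGroup (n : ℕ) [NeZero n] :
    Subgroup.closure (insert (extendedRotation n) (Set.range fun i : ℕ =>
      (SemidirectProduct.inl (affineBraidGen n i) : ExtendedAffineBraidGroup n))) = ⊤ := by
  refine eq_top_iff.2 fun g _ => ?_
  rw [← SemidirectProduct.inl_left_mul_inr_right g]
  refine mul_mem ?_ ?_
  · have hmem : g.left ∈ Subgroup.closure (Set.range (affineBraidGen n)) :=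
      closure_range_affineBraidGen n ▸ Subgroup.mem_top _
    have hmap := Subgroup.mem_map_of_mem (SemidirectProduct.inl (φ :=
      zpowersHom (MulAut (AffineBraidGroup n)) (affineBraidRotate n))) hmem
    rw [MonoidHom.map_closure] at hmap
    refine Subgroup.closure_mono ?_ hmap
    rintro _ ⟨_, ⟨i, rfl⟩, rfl⟩
    exact .inr ⟨i.val, by simp⟩
  · have hzpow : (SemidirectProduct.inr g.right : ExtendedAffineBraidGroup n) =
        extendedRotation n ^ g.right.toAdd := by
      rw [extendedRotation, ← map_zpow, ← ofAdd_zsmul, smul_eq_mul, mul_one, ofAdd_toAdd]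
    rw [hzpow]
    exact zpow_mem (Subgroup.subset_closure (Set.mem_insert _ _)) _

lemma isAffineChain_extended (K : ℕ) :
    IsAffineChain (fun i => (SemidirectProduct.inl (affineBraidGen (K + 2) i) :
      ExtendedAffineBraidGroup (K + 2))) (extendedRotation (K + 2)) K where
  braid i hi := by
    simp only [← map_mul, Nat.cast_succ]
    rw [affineBraidGen_braid (by omega)]
  comm i j hij hj := by
    refine (affineBraidGen_commute (by omega) ?_ ?_).map SemidirectProduct.inl
    · have := intCast_zmod_ne_zero (n := K + 2) (k := i - j - 1) (by omega) (by grind)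
      simpa [sub_eq_zero] using this
    · have := intCast_zmod_ne_zero (n := K + 2) (k := i - j + 1) (by omega) (by grind)
      simpa [add_eq_zero_iff_eq_neg] using this
  exists_halfTwists i hi := by
    refine ⟨_, isSparse_residueSet (K + 2) i, fun f => ?_, fun j hj hj' => ⟨fun h => ?_, ?_⟩⟩
    · rw [inl_smul, affineAction_gen]
    · by_contra hne
      refine intCast_zmod_ne_zero (n := K + 2) (k := j - i) (by omega) (by grind) ?_
      simp [mem_residueSet.1 h]
    · rintro rfl
      simp
  rotate i := by simpa using extendedRotation_semiconjBy (K + 2) i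
  periodic i := by simp
  rotate_of := extendedRotation_smul_of _
  closure_eq_top := closure_extendedAffineBraidGroup _

theorem affineAction_injective (n : ℕ) [n.AtLeastTwo] : Function.Injective (affineAction n) := by
  obtain ⟨K, rfl⟩ := Nat.exists_eq_add_of_le' (Nat.AtLeastTwo.prop (n := n))
  refine (injective_iff_map_eq_one _).2 fun g hg => ?_
  refine SemidirectProduct.inl_injective ((isAffineChain_extended K).eq_one_of_smul_eq fun f => ?_)
  rw [inl_smul, hg, MulAut.one_apply]

end ExtendedAffineBraidGroup

section LiftedGen

lemma rangeProd_halfTwists {T : ℕ → Set ℤ} (hT : ∀ k, IsSparse (T k)) {d : ℕ}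
    (hU : IsSparse (⋃ k < d, T k)) (hd : (Set.Iio d).PairwiseDisjoint T) :
    rangeProd (fun k => halfTwists (T k) (hT k)) d = halfTwists (⋃ k < d, T k) hU := by
  induction d with
  | zero =>
    refine mulAut_freeGroup_ext fun j => ?_
    rw [halfTwists_of_notMem (by simp) (by simp), rangeProd_zero, MulAut.one_apply]
  | succ d ih =>
    have hunion : ⋃ k < d + 1, T k = (⋃ k < d, T k) ∪ T d := Set.biUnion_lt_succ T d
    have hdisj : Disjoint (⋃ k < d, T k) (T d) := Set.disjoint_iUnion₂_left.2 fun k hk =>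
      hd (Set.mem_Iio.2 (hk.trans d.lt_succ_self)) (Set.mem_Iio.2 d.lt_succ_self) hk.ne
    rw [rangeProd_succ, ih (hU.mono (hunion ▸ Set.subset_union_left))
        (hd.subset (Set.Iio_subset_Iio d.le_succ)), halfTwists_mul _ (hunion ▸ hU) hdisj]
    exact halfTwists_congr hunion.symm

variable {m t : ℕ}

lemma residueSet_eq_biUnion [NeZero m] (ht : 0 < t) (i : ZMod m) :
    residueSet m i = ⋃ k < t, residueSet (t * m) ((i.val + k * m : ℕ) : ZMod (t * m)) := by
  have : NeZero t := ⟨ht.ne'⟩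
  have hcast (j : ℤ) (r : ℕ) (hj : (j : ZMod (t * m)) = r) : (j : ZMod m) = r := by
    simpa only [map_intCast, map_natCast] using
      congrArg (ZMod.castHom (Dvd.intro_left t rfl : m ∣ t * m) (ZMod m)) hj
  ext j
  simp only [Set.mem_iUnion, mem_residueSet, exists_prop]
  refine ⟨?_, fun ⟨k, _, hj⟩ => by simpa using hcast j _ hj⟩
  rintro rfl
  have hval : ((j : ZMod (t * m)).val : ZMod (t * m)) = j := ZMod.natCast_rightInverse _
  refine ⟨(j : ZMod (t * m)).val / m, Nat.div_lt_of_lt_mul ?_, ?_⟩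
  · exact mul_comm t m ▸ ZMod.val_lt _
  · rw [hcast j _ hval.symm, ZMod.val_natCast, Nat.mod_add_div', hval]

lemma pairwiseDisjoint_residueSet [NeZero m] (i : ZMod m) :
    (Set.Iio t).PairwiseDisjoint fun k =>
      residueSet (t * m) ((i.val + k * m : ℕ) : ZMod (t * m)) := by
  refine fun k hk l hl hkl => disjoint_residueSet fun h => hkl ?_
  have hlt {k : ℕ} (hk : k < t) : i.val + k * m < t * m := by
    have := i.val_lt
    nlinarith
  have := CharP.natCast_injOn_Iio (ZMod (t * m)) (t * m) (hlt hk) (hlt hl) h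
  simpa [NeZero.ne m] using this

lemma affineAction_liftedGen [m.AtLeastTwo] [(t * m).AtLeastTwo] (i : ZMod m) :
    affineAction (t * m) (liftedGen m t i) = affineAction m (affineBraidGen m i) := by
  have ht : 0 < t := Nat.pos_of_mul_pos_right (NeZero.pos (t * m))
  have hU := residueSet_eq_biUnion ht i
  rw [affineAction_gen, halfTwists_congr (hT' := hU ▸ isSparse_residueSet m i) hU,
    ← rangeProd_halfTwists (fun k => isSparse_residueSet _ _) _ (pairwiseDisjoint_residueSet i)]
  exact map_rangeProd_eq _ fun k _ => affineAction_gen _ _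

lemma exists_comp_eq_of_range_le {A B C : Type*} [Group A] [Group B] [Group C] {f : A →* C}
    {g : B →* C} (hg : Function.Injective g) (h : f.range ≤ g.range) :
    ∃ ψ : A →* B, g.comp ψ = f := by
  refine ⟨(MonoidHom.ofInjective hg).symm.toMonoidHom.comp
    ((Subgroup.inclusion h).comp f.rangeRestrict), MonoidHom.ext fun a => ?_⟩
  exact congrArg Subtype.val
    ((MonoidHom.ofInjective hg).apply_symm_apply (Subgroup.inclusion h (f.rangeRestrict a)))

lemma range_affineAction_le [m.AtLeastTwo] [(t * m).AtLeastTwo] :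
    (affineAction m).range ≤ (affineAction (t * m)).range := by
  rw [MonoidHom.range_eq_map, ← closure_range_affineBraidGen, MonoidHom.map_closure,
    Subgroup.closure_le]
  rintro _ ⟨_, ⟨i, rfl⟩, rfl⟩
  exact ⟨liftedGen m t i, affineAction_liftedGen i⟩

end LiftedGen

/-- Let `m ≥ 2` and `t ≥ 2`. The group homomorphism `ψ : B(Ã_{m−1}) → B(Ã_{tm−1})`
determined by `ψ(s_i) = s_i s_{i+m} s_{i+2m} ⋯ s_{i+(t−1)m}` for `i ∈ ℤ/m` is well defined
and injective. -/
theorem exists_injective_affineBraid_lift (m t : ℕ) (hm : 2 ≤ m) (ht : 2 ≤ t) :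
    ∃ ψ : AffineBraidGroup m →* AffineBraidGroup (t * m),
      Function.Injective ψ ∧
      ∀ i : ZMod m, ψ (affineBraidGen m i) = liftedGen m t i := by
  have : m.AtLeastTwo := ⟨hm⟩
  have : (t * m).AtLeastTwo := ⟨by nlinarith⟩
  obtain ⟨ψ, hψ⟩ := exists_comp_eq_of_range_le (affineAction_injective (t * m))
    (range_affineAction_le (m := m))
  refine ⟨ψ, .of_comp (f := affineAction (t * m)) ?_, fun i => ?_⟩
  · rw [← MonoidHom.coe_comp, hψ]
    exact affineAction_injective m
  · apply affineAction_injective (t * m)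
    rw [affineAction_liftedGen, ← hψ, MonoidHom.comp_apply]
end

section
/- For every m ≥ 2, the group homomorphism B(Ã_{m−1}) → Aut(F_{m+1}) sending s_i to σ_i for all i ∈ ℤ/m is injective; that is, the affine braid group B(Ã_{m−1}) acts faithfully on the free group F_{m+1} via the automorphisms σ_i. -/
/-- The free group `F_{m+1}` on generators `y_0, …, y_{m−1}, y`: `y_j = of (some j)` for
`j ∈ ℤ/m` and `y = of none`. The map `σ_i` on generators: `σ_i(y_i) = y_{i+1}`,
`σ_i(y_{i+1}) = y_{i+1}⁻¹ y_i y_{i+1}`, `σ_i(y_j) = y_j` for `j ≠ i, i+1`, `σ_i(y) = y`. -/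
def sigmaMap (m : ℕ) (i : ZMod m) :
    Option (ZMod m) → FreeGroup (Option (ZMod m))
  | none => FreeGroup.of none
  | some j =>
    if j = i then FreeGroup.of (some (i + 1))
    else if j = i + 1 then
      (FreeGroup.of (some (i + 1)))⁻¹ * FreeGroup.of (some i) * FreeGroup.of (some (i + 1))
    else FreeGroup.of (some j)

/-- The endomorphism `σ_i` of the free group `F_{m+1}` induced by `sigmaMap`. -/
def sigmaHom (m : ℕ) (i : ZMod m) :
    FreeGroup (Option (ZMod m)) →* FreeGroup (Option (ZMod m)) :=
  FreeGroup.lift (sigmaMap m i)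

/-!
The affine braid group embeds into the annular braid group, its extension by the rotation `ρ` of the
indices, and the action extends with `ρ` permuting the `y_j` cyclically. Let `τ` be the loop of the
first strand around the core of the annulus. The conjugates of `τ` by `s_{k-1} ⋯ s_0` act on the
subgroup `⟨y_0, …, y_{m-1}⟩` as conjugation by the `y_k`, and every affine braid is a word in these
meridians times an ordinary braid in `s_0, …, s_{m-2}`. If such a product acts trivially, then,
because ordinary braids fix the boundary word `y_0 ⋯ y_{m-1}`, the word commutes with the boundary
word in a free group; it has exponent sum zero because affine braids have rotation degree zero, so
it is trivial. What remains is Artin's theorem that the ordinary braid group acts faithfully. A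
braid acting trivially returns the first strand to its place, hence is a loop of that strand around
the others times a braid of the other strands; killing `y_0` shows that the second factor acts
trivially, and the first factor is then read off from the conjugator of `y_0`.
-/

namespace AffineBraid

open FreeGroup (of)

/-! ### Commuting elements of free groups -/

theorem eq_of_commute_of {α : Type*} {p q : α} (h : Commute (of p) (of q)) : p = q := by
  classical
  by_contra hpq
  have hword := congrArg FreeGroup.toWord h.eq
  simp only [FreeGroup.toWord_mul, FreeGroup.toWord_of] at hword
  simp [FreeGroup.reduce, hpq] at hword

theorem isCyclic_of_isFreeGroup (K : Type*) [Group K] [IsFreeGroup K] [IsMulCommutative K] :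
    IsCyclic K := by
  have hsub : Subsingleton (IsFreeGroup.Generators K) := ⟨fun p q => eq_of_commute_of <|
    (IsFreeGroup.mulEquiv K).injective <| by rw [map_mul, map_mul, mul_comm']⟩
  have hcyc : IsCyclic (FreeGroup (IsFreeGroup.Generators K)) := by
    rcases isEmpty_or_nonempty (IsFreeGroup.Generators K) with hE | ⟨⟨p⟩⟩
    · infer_instance
    · have := uniqueOfSubsingleton p
      infer_instance
  exact isCyclic_of_surjective (IsFreeGroup.mulEquiv K) (IsFreeGroup.mulEquiv K).surjective

theorem exists_zpow_of_commute {K : Type*} [Group K] [IsFreeGroup K] {a b : K}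
    (h : Commute a b) : ∃ (z : K) (i j : ℤ), a = z ^ i ∧ b = z ^ j := by
  have hcomm : ∀ x ∈ ({a, b} : Set K), ∀ y ∈ ({a, b} : Set K), x * y = y * x := by
    rintro x (rfl | rfl) y (rfl | rfl)
    exacts [rfl, h.eq, h.symm.eq, rfl]
  have := Subgroup.isMulCommutative_closure hcomm
  obtain ⟨z, hz⟩ := (isCyclic_of_isFreeGroup (Subgroup.closure {a, b})).exists_generator
  obtain ⟨i, hi⟩ := hz ⟨a, Subgroup.subset_closure (by simp)⟩
  obtain ⟨j, hj⟩ := hz ⟨b, Subgroup.subset_closure (by simp)⟩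
  exact ⟨z, i, j, congrArg Subtype.val hi.symm, congrArg Subtype.val hj.symm⟩

theorem map_eq_one_of_commute {K M : Type*} [Group K] [IsFreeGroup K] [Group M]
    [IsMulTorsionFree M] (f : K →* M) {a b : K} (h : Commute a b) (hb : b ≠ 1) (hf : f b = 1) :
    f a = 1 := by
  obtain ⟨z, i, j, rfl, rfl⟩ := exists_zpow_of_commute h
  have hj : j ≠ 0 := by
    rintro rfl
    exact hb (zpow_zero z)
  rw [map_zpow] at hf ⊢
  rw [(IsMulTorsionFree.zpow_eq_one_iff_left hj).1 hf, one_zpow]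

/-! ### Tuples in a group and Hurwitz moves -/

variable {G H : Type*} [Group G] [Group H]

section HurwitzMove

variable {I J : Type*} [DecidableEq I] [DecidableEq J]

/-- The Hurwitz move on a family of group elements, replacing the entries `(a i, a j)` by
`(a j, (a j)⁻¹ * a i * a j)`. Both the Artin automorphisms and the conjugation action of braids on
meridians are moves of this kind. -/
def hurwitzMove (a : I → G) (i j : I) : I → G :=
  Function.update (Function.update a j ((a j)⁻¹ * a i * a j)) i (a j)

@[simp]
theorem hurwitzMove_left (a : I → G) (i j : I) : hurwitzMove a i j i = a j := by
  simp [hurwitzMove]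

theorem hurwitzMove_right (a : I → G) {i j : I} (hij : i ≠ j) :
    hurwitzMove a i j j = (a j)⁻¹ * a i * a j := by
  simp [hurwitzMove, hij.symm]

theorem hurwitzMove_of_ne (a : I → G) {i j k : I} (hi : k ≠ i) (hj : k ≠ j) :
    hurwitzMove a i j k = a k := by
  simp [hurwitzMove, hi, hj]

theorem map_hurwitzMove (f : G →* H) (a : I → G) (i j k : I) :
    f (hurwitzMove a i j k) = hurwitzMove (fun l => f (a l)) i j k := by
  simp only [hurwitzMove, Function.apply_update fun _ => f, map_mul, map_inv]

theorem hurwitzMove_comp_of_injOn (a : J → G) {e : I → J} {t : Set I} (he : t.InjOn e) {i j k : I}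
    (hi : i ∈ t) (hj : j ∈ t) (hk : k ∈ t) :
    hurwitzMove (fun l => a (e l)) i j k = hurwitzMove a (e i) (e j) (e k) := by
  simp only [hurwitzMove, Function.update_apply, he.eq_iff hk hi, he.eq_iff hk hj]

end HurwitzMove

/-- The homomorphism from the free group of rank `n` given by the tuple `a 0, …, a (n - 1)`. -/
def tupleHom (a : ℕ → G) (n : ℕ) : FreeGroup (Fin n) →* G :=
  FreeGroup.lift fun k => a k

@[simp]
theorem tupleHom_of (a : ℕ → G) {n : ℕ} (k : Fin n) : tupleHom a n (of k) = a k :=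
  FreeGroup.lift_apply_of

theorem map_tupleHom (f : G →* H) (a : ℕ → G) {n : ℕ} (w : FreeGroup (Fin n)) :
    f (tupleHom a n w) = tupleHom (fun k => f (a k)) n w := by
  suffices f.comp (tupleHom a n) = tupleHom (fun k => f (a k)) n from DFunLike.congr_fun this w
  exact FreeGroup.ext_hom _ _ fun k => by simp

theorem tupleHom_congr {a b : ℕ → G} {n : ℕ} (h : ∀ k < n, a k = b k) :
    tupleHom a n = tupleHom b n :=
  FreeGroup.ext_hom _ _ fun k => by simp [h k k.2]

theorem mem_range_tupleHom (a : ℕ → G) {n k : ℕ} (hk : k < n) : a k ∈ (tupleHom a n).range :=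
  ⟨of ⟨k, hk⟩, tupleHom_of a _⟩

theorem range_tupleHom_le {a : ℕ → G} {n : ℕ} {K : Subgroup G} (h : ∀ k < n, a k ∈ K) :
    (tupleHom a n).range ≤ K := by
  refine FreeGroup.range_lift_le ?_
  rintro _ ⟨k, rfl⟩
  exact h k k.2

theorem range_tupleHom_hurwitzMove (a : ℕ → G) {j n : ℕ} (hj : j + 1 < n) :
    (tupleHom (hurwitzMove a j (j + 1)) n).range = (tupleHom a n).range := by
  have hne : j ≠ j + 1 := (Nat.lt_succ_self j).ne
  refine le_antisymm (range_tupleHom_le fun k hk => ?_) (range_tupleHom_le fun k hk => ?_)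
  · have hmem {l : ℕ} (hl : l < n) : a l ∈ (tupleHom a n).range := mem_range_tupleHom a hl
    rcases eq_or_ne k j with rfl | hkj
    · simpa using hmem hj
    rcases eq_or_ne k (j + 1) with rfl | hkj1
    · rw [hurwitzMove_right a hne]
      exact mul_mem (mul_mem (inv_mem (hmem hj)) (hmem (by lia))) (hmem hj)
    · simpa [hurwitzMove_of_ne a hkj hkj1] using hmem hk
  · set b := hurwitzMove a j (j + 1) with hb
    have hmem {l : ℕ} (hl : l < n) : b l ∈ (tupleHom b n).range := mem_range_tupleHom b hl
    have hbj : b j = a (j + 1) := hurwitzMove_left a j (j + 1)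
    rcases eq_or_ne k j with rfl | hkj
    · have hak : a k = b k * b (k + 1) * (b k)⁻¹ := by
        rw [hbj, hb, hurwitzMove_right a hne]
        group
      exact hak ▸ mul_mem (mul_mem (hmem hk) (hmem hj)) (inv_mem (hmem hk))
    rcases eq_or_ne k (j + 1) with rfl | hkj1
    · exact hbj ▸ hmem (by lia)
    · simpa [hb, hurwitzMove_of_ne a hkj hkj1] using hmem hk

/-- The product `y_0 ⋯ y_{n-1}` of the free generators, representing the boundary loop of a
punctured disc. -/
def boundaryWord (n : ℕ) : FreeGroup (Fin n) :=
  ((List.finRange n).map of).prod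

theorem tupleHom_boundaryWord (a : ℕ → G) (n : ℕ) :
    tupleHom a n (boundaryWord n) = ((List.range n).map a).prod := by
  simp [boundaryWord, map_list_prod, ← List.map_coe_finRange_eq_range, Function.comp_def]

theorem tupleHom_hurwitzMove_boundaryWord (a : ℕ → G) {j n : ℕ} (hj : j + 1 < n) :
    tupleHom (hurwitzMove a j (j + 1)) n (boundaryWord n) = tupleHom a n (boundaryWord n) := by
  simp only [tupleHom_boundaryWord]
  induction n, hj using Nat.le_induction with
  | base =>
    have hinit : (List.range j).map (hurwitzMove a j (j + 1)) = (List.range j).map a :=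
      List.map_congr_left fun k hk => by
        have := List.mem_range.1 hk
        exact hurwitzMove_of_ne a (by lia) (by lia)
    simp only [List.prod_range_succ, hinit, hurwitzMove_left,
      hurwitzMove_right a (Nat.lt_succ_self j).ne]
    group
  | succ n hn ih =>
    rw [List.prod_range_succ, ih, List.prod_range_succ, hurwitzMove_of_ne a (by lia) (by lia)]

/-! ### Braid chains -/

/-- The elements `s 0, …, s (n - 1)` satisfy the braid relations of type `A_n`. -/
structure IsBraidChain (s : ℕ → G) (n : ℕ) : Prop where
  braid : ∀ i, i + 1 < n → s i * s (i + 1) * s i = s (i + 1) * s i * s (i + 1)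
  comm : ∀ i j, i + 1 < j → j < n → Commute (s i) (s j)

/-- The subgroup generated by `s 0, …, s (n - 1)`. -/
def chainSubgroup (s : ℕ → G) (n : ℕ) : Subgroup G :=
  Subgroup.closure (s '' Set.Iio n)

theorem mem_chainSubgroup (s : ℕ → G) {n i : ℕ} (hi : i < n) : s i ∈ chainSubgroup s n :=
  Subgroup.subset_closure ⟨i, hi, rfl⟩

theorem chainSubgroup_le {s : ℕ → G} {n : ℕ} {K : Subgroup G} (h : ∀ i < n, s i ∈ K) :
    chainSubgroup s n ≤ K := by
  rw [chainSubgroup, Subgroup.closure_le]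
  rintro _ ⟨i, hi, rfl⟩
  exact h i hi

/-- The product `s (k - 1) * ⋯ * s 1 * s 0`, the braid moving the first strand past the next
`k` ones. -/
def descProd (s : ℕ → G) : ℕ → G
  | 0 => 1
  | k + 1 => s k * descProd s k

theorem descProd_zero (s : ℕ → G) : descProd s 0 = 1 := rfl

theorem descProd_succ (s : ℕ → G) (k : ℕ) : descProd s (k + 1) = s k * descProd s k := rfl

theorem descProd_succ_eq_mul_zero (s : ℕ → G) (k : ℕ) :
    descProd s (k + 1) = descProd (fun i => s (i + 1)) k * s 0 := by
  induction k with
  | zero => simp [descProd]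
  | succ k ih => rw [descProd_succ, ih, descProd_succ, mul_assoc]

theorem descProd_mem {s : ℕ → G} {k : ℕ} {K : Subgroup G} (h : ∀ i < k, s i ∈ K) :
    descProd s k ∈ K := by
  induction k with
  | zero => exact one_mem K
  | succ k ih => exact mul_mem (h k k.lt_succ_self) (ih fun i hi => h i (hi.trans k.lt_succ_self))

namespace IsBraidChain

variable {s : ℕ → G} {n : ℕ}

theorem tail (h : IsBraidChain s (n + 1)) : IsBraidChain (fun i => s (i + 1)) n where
  braid i hi := h.braid (i + 1) (by lia)
  comm i j hij hj := h.comm (i + 1) (j + 1) (by lia) (by lia)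

theorem commute_descProd (h : IsBraidChain s n) {k j : ℕ} (hkj : k < j) (hj : j < n) :
    Commute (s j) (descProd s k) := by
  induction k with
  | zero => exact Commute.one_right _
  | succ k ih => exact (h.comm k j hkj hj).symm.mul_right (ih (by lia))

theorem semiconjBy_descProd (h : IsBraidChain s n) {k j : ℕ} (hjk : j + 1 < k) (hk : k ≤ n) :
    SemiconjBy (descProd s k) (s (j + 1)) (s j) := by
  induction k with
  | zero => lia
  | succ k ih =>
    rcases Nat.lt_or_ge (j + 1) k with hlt | hge
    · exact SemiconjBy.mul_left (h.comm j k hlt (by lia)).symm (ih hlt (by lia))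
    · obtain rfl : k = j + 1 := by lia
      have hbraid : SemiconjBy (s (j + 1) * s j) (s (j + 1)) (s j) := by
        simpa only [SemiconjBy, mul_assoc] using (h.braid j (by lia)).symm
      have hcomm : SemiconjBy (descProd s j) (s (j + 1)) (s (j + 1)) :=
        (h.commute_descProd j.lt_succ_self (by lia)).symm
      simpa only [descProd_succ, mul_assoc] using hbraid.mul_left hcomm

theorem conj_descProd (h : IsBraidChain s n) {k : ℕ} (hk : k < n) :
    descProd s (k + 1) * s 0 * (descProd s (k + 1))⁻¹ =
      (descProd s k)⁻¹ * s k * descProd s k := by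
  induction k with
  | zero => simp [descProd]
  | succ k ih =>
    have hcomm : Commute (s (k + 1)) (descProd s k) := h.commute_descProd k.lt_succ_self hk
    have hbraid : s (k + 1) * s k * (s (k + 1))⁻¹ = (s k)⁻¹ * s (k + 1) * s k := by
      rw [mul_inv_eq_iff_eq_mul, mul_assoc, mul_assoc, eq_inv_mul_iff_mul_eq]
      simpa only [mul_assoc] using h.braid k hk
    calc descProd s (k + 1 + 1) * s 0 * (descProd s (k + 1 + 1))⁻¹
        = s (k + 1) * (descProd s (k + 1) * s 0 * (descProd s (k + 1))⁻¹) * (s (k + 1))⁻¹ := by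
          rw [descProd_succ s (k + 1)]; group
      _ = (s (k + 1) * (descProd s k)⁻¹) * s k * (descProd s k * (s (k + 1))⁻¹) := by
          rw [ih (by lia)]; group
      _ = (descProd s k)⁻¹ * (s (k + 1) * s k * (s (k + 1))⁻¹) * descProd s k := by
          rw [hcomm.inv_right.eq, hcomm.inv_left.symm.eq]; group
      _ = (descProd s (k + 1))⁻¹ * s (k + 1) * descProd s (k + 1) := by
          rw [hbraid, descProd_succ]; group

end IsBraidChain

/-! ### Chains of type `B` and their meridians -/

/-- The elements `s 0, …, s (n - 1), τ` satisfy the braid relations of type `B_{n+1}`, where `τ` is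
joined to `s 0` by the edge labelled `4`. -/
structure IsTypeBChain (s : ℕ → G) (τ : G) (n : ℕ) : Prop extends IsBraidChain s n where
  comm_base : ∀ i, i + 1 < n → Commute (s (i + 1)) τ
  four : 0 < n → s 0 * τ * s 0 * τ = τ * s 0 * τ * s 0

/-- The conjugates of `τ` by `1`, `s 0`, `s 1 * s 0`, …. When `τ` is a loop of the first of `n + 1`
points around a further puncture, the meridians are the corresponding loops of all the points. -/
def meridian (s : ℕ → G) (τ : G) (k : ℕ) : G :=
  descProd s k * τ * (descProd s k)⁻¹

theorem meridian_zero (s : ℕ → G) (τ : G) : meridian s τ 0 = τ := by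
  simp [meridian, descProd_zero]

theorem meridian_succ (s : ℕ → G) (τ : G) (k : ℕ) :
    meridian s τ (k + 1) = s k * meridian s τ k * (s k)⁻¹ := by
  simp only [meridian, descProd_succ, mul_inv_rev, mul_assoc]

theorem map_meridian {M : Type*} [CommGroup M] (f : G →* M) (s : ℕ → G) (τ : G) (k : ℕ) :
    f (meridian s τ k) = f τ := by
  simp [meridian]

namespace IsTypeBChain

variable {s : ℕ → G} {τ : G} {n : ℕ}

theorem commute_meridian_of_lt (h : IsTypeBChain s τ n) {k j : ℕ} (hkj : k < j) (hj : j < n) :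
    Commute (s j) (meridian s τ k) := by
  obtain ⟨i, rfl⟩ := Nat.exists_eq_add_of_lt hkj
  have hD := h.commute_descProd hkj hj
  exact (hD.mul_right (h.comm_base _ hj)).mul_right hD.inv_right

theorem commute_meridian_of_gt (h : IsTypeBChain s τ n) {k j : ℕ} (hjk : j + 1 < k)
    (hk : k ≤ n) : Commute (s j) (meridian s τ k) := by
  have hconj : s j = descProd s k * s (j + 1) * (descProd s k)⁻¹ :=
    eq_mul_inv_of_mul_eq (h.semiconjBy_descProd hjk hk).eq.symm
  rw [hconj, meridian]
  exact (Commute.conj_iff _).2 (h.comm_base j (by lia))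

theorem four_meridian (h : IsTypeBChain s τ n) {k : ℕ} (hk : k < n) :
    s k * meridian s τ k * s k * meridian s τ k =
      meridian s τ k * s k * meridian s τ k * s k := by
  induction k with
  | zero => simpa only [meridian_zero] using h.four hk
  | succ k ih =>
    -- Conjugation by `s k * s (k + 1)` carries `s k` and the `k`-th meridian to their successors.
    let c := MulAut.conj (s k * s (k + 1))
    have hgen : c (s k) = s (k + 1) := by
      rw [MulAut.conj_apply, mul_inv_eq_iff_eq_mul, h.braid k hk, mul_assoc]
    have hmer : c (meridian s τ k) = meridian s τ (k + 1) := by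
      have hcomm := h.commute_meridian_of_lt k.lt_succ_self hk
      rw [MulAut.conj_apply, meridian_succ, mul_inv_rev, mul_assoc (s k), hcomm.eq]
      group
    simpa only [map_mul, hgen, hmer] using congrArg c (ih (by lia))

theorem conj_meridian (h : IsTypeBChain s τ n) {j k : ℕ} (hj : j < n) (hk : k ≤ n) :
    s j * meridian s τ k * (s j)⁻¹ = hurwitzMove (meridian s τ) j (j + 1) k := by
  rcases eq_or_ne k j with rfl | hkj
  · rw [hurwitzMove_left, meridian_succ]
  rcases eq_or_ne k (j + 1) with rfl | hkj1
  · have hfour := h.four_meridian hj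
    rw [hurwitzMove_right _ hkj.symm, meridian_succ]
    generalize meridian s τ j = a at *
    generalize s j = t at *
    calc t * (t * a * t⁻¹) * t⁻¹ = t * a⁻¹ * t⁻¹ * (t * a * t * a) * t⁻¹ * t⁻¹ := by group
      _ = (t * a * t⁻¹)⁻¹ * a * (t * a * t⁻¹) := by rw [hfour]; group
  · rw [hurwitzMove_of_ne _ hkj hkj1, mul_inv_eq_iff_eq_mul]
    rcases lt_or_gt_of_ne hkj with hlt | hgt
    · exact h.commute_meridian_of_lt hlt hj
    · exact h.commute_meridian_of_gt (by lia) hk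

theorem chainSubgroup_le_normalizer (h : IsTypeBChain s τ n) :
    chainSubgroup s n ≤
      Subgroup.normalizer ((tupleHom (meridian s τ) (n + 1)).range : Set G) := by
  refine chainSubgroup_le fun j hj => ?_
  rw [Subgroup.mem_normalizer_iff_map_conj_eq, ← MonoidHom.range_comp]
  have hcomp : (MulAut.conj (s j)).toMonoidHom.comp (tupleHom (meridian s τ) (n + 1)) =
      tupleHom (hurwitzMove (meridian s τ) j (j + 1)) (n + 1) := by
    refine FreeGroup.ext_hom _ _ fun k => ?_
    simpa using h.conj_meridian hj (Nat.le_of_lt_succ k.2)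
  exact hcomp ▸ range_tupleHom_hurwitzMove _ (Nat.succ_lt_succ hj)

theorem exists_mul_of_mem_sup (h : IsTypeBChain s τ n) {g : G}
    (hg : g ∈ (tupleHom (meridian s τ) (n + 1)).range ⊔ chainSubgroup s n) :
    ∃ w, ∃ c ∈ chainSubgroup s n, g = tupleHom (meridian s τ) (n + 1) w * c := by
  rw [← SetLike.mem_coe,
    Subgroup.coe_mul_of_right_le_normalizer_left _ _ h.chainSubgroup_le_normalizer] at hg
  obtain ⟨_, ⟨w, rfl⟩, c, hc, rfl⟩ := hg
  exact ⟨w, c, hc, rfl⟩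

end IsTypeBChain

/-! ### Braids returning the first strand to its place -/

/-- The subgroup of the braid group on `n + 2` strands generated by the loops of the first strand
around the others and by the braids of the remaining strands. -/
def firstStrandSubgroup (s : ℕ → G) (n : ℕ) : Subgroup G :=
  (tupleHom (meridian (fun i => s (i + 1)) (s 0 * s 0)) (n + 1)).range ⊔
    chainSubgroup (fun i => s (i + 1)) n

theorem succ_mem_firstStrandSubgroup (s : ℕ → G) {n j : ℕ} (hj : j < n) :
    s (j + 1) ∈ firstStrandSubgroup s n :=
  Subgroup.mem_sup_right (mem_chainSubgroup (fun i => s (i + 1)) hj)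

namespace IsBraidChain

variable {s : ℕ → G} {n : ℕ}

theorem isTypeBChain_tail (h : IsBraidChain s (n + 1)) :
    IsTypeBChain (fun i => s (i + 1)) (s 0 * s 0) n where
  toIsBraidChain := h.tail
  comm_base i hi :=
    have hcomm : Commute (s (i + 1 + 1)) (s 0) := (h.comm 0 (i + 2) (by lia) (by lia)).symm
    hcomm.mul_right hcomm
  four hn := by
    have hbraid := h.braid 0 (by lia)
    simp only [Nat.zero_add] at hbraid ⊢
    generalize s 0 = a at *
    generalize s 1 = b at *
    have hcomm : Commute (b * (a * a) * b) a := by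
      calc b * (a * a) * b * a = b * a * (a * b * a) := by group
        _ = (b * a * b) * (a * b) := by rw [hbraid]; group
        _ = a * (b * (a * a) * b) := by rw [← hbraid]; group
    simpa only [mul_assoc] using (hcomm.mul_right hcomm).eq

theorem meridian_tail (h : IsBraidChain s (n + 1)) {j : ℕ} (hj : j ≤ n) :
    meridian (fun i => s (i + 1)) (s 0 * s 0) j =
      (descProd s j)⁻¹ * (s j * s j) * descProd s j := by
  have hconj := h.conj_descProd (Nat.lt_succ_of_le hj)
  calc meridian (fun i => s (i + 1)) (s 0 * s 0) j
      = (descProd s (j + 1) * s 0 * (descProd s (j + 1))⁻¹) *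
          (descProd s (j + 1) * s 0 * (descProd s (j + 1))⁻¹) := by
        rw [meridian, descProd_succ_eq_mul_zero]; group
    _ = (descProd s j)⁻¹ * (s j * s j) * descProd s j := by rw [hconj]; group

-- The products `descProd s k` represent the cosets of the subgroup, the first strand going to
-- position `k`; multiplication by `s j` permutes the cosets by the transposition of `j, j + 1`.
theorem inv_descProd_mul_mul_descProd_swap_mem (h : IsBraidChain s (n + 1)) {j k : ℕ}
    (hj : j ≤ n) (hk : k ≤ n + 1) :
    (descProd s k)⁻¹ * s j * descProd s (Equiv.swap j (j + 1) k) ∈ firstStrandSubgroup s n := by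
  rcases eq_or_ne k j with rfl | hkj
  · have hmer : (descProd s k)⁻¹ * s k * descProd s (k + 1) =
        meridian (fun i => s (i + 1)) (s 0 * s 0) k := by
      rw [h.meridian_tail hj, descProd_succ]; group
    rw [Equiv.swap_apply_left, hmer]
    exact Subgroup.mem_sup_left (mem_range_tupleHom _ (Nat.lt_succ_of_le hj))
  rcases eq_or_ne k (j + 1) with rfl | hkj1
  · rw [Equiv.swap_apply_right, mul_assoc, ← descProd_succ, inv_mul_cancel]
    exact one_mem _
  rw [Equiv.swap_apply_of_ne_of_ne hkj hkj1, mul_assoc]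
  rcases lt_or_gt_of_ne hkj with hlt | hgt
  · rw [(h.commute_descProd hlt (by lia)).eq, inv_mul_cancel_left]
    obtain ⟨i, rfl⟩ := Nat.exists_eq_add_of_lt hlt
    exact succ_mem_firstStrandSubgroup s (by lia)
  · rw [← (h.semiconjBy_descProd (j := j) (by lia) hk).eq, inv_mul_cancel_left]
    exact succ_mem_firstStrandSubgroup s (by lia)

theorem exists_mul_descProd_mem (h : IsBraidChain s (n + 1)) {g : G}
    (hg : g ∈ chainSubgroup s (n + 1)) :
    ∃ k ≤ n + 1, g * descProd s k ∈ firstStrandSubgroup s n := by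
  have swap_le {j k : ℕ} (hj : j < n + 1) (hk : k ≤ n + 1) : Equiv.swap j (j + 1) k ≤ n + 1 := by
    rw [Equiv.swap_apply_def]
    split_ifs <;> lia
  rw [chainSubgroup] at hg
  induction hg using Subgroup.closure_induction_right with
  | one => exact ⟨0, Nat.zero_le _, by simp [descProd_zero]⟩
  | mul_right x _ y hy ih =>
    obtain ⟨j, hj, rfl⟩ := hy
    obtain ⟨k, hk, hx⟩ := ih
    refine ⟨Equiv.swap j (j + 1) k, swap_le hj hk, ?_⟩
    have hmem := h.inv_descProd_mul_mul_descProd_swap_mem (Nat.le_of_lt_succ hj) hk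
    simpa only [mul_assoc, mul_inv_cancel_left] using mul_mem hx hmem
  | mul_inv_cancel x _ y hy ih =>
    obtain ⟨j, hj, rfl⟩ := hy
    obtain ⟨k, hk, hx⟩ := ih
    refine ⟨Equiv.swap j (j + 1) k, swap_le hj hk, ?_⟩
    have hmem := inv_mem (h.inv_descProd_mul_mul_descProd_swap_mem (Nat.le_of_lt_succ hj)
      (swap_le hj hk))
    simpa only [mul_inv_rev, inv_inv, Equiv.swap_apply_self, mul_assoc, mul_inv_cancel_left] using
      mul_mem hx hmem

end IsBraidChain

/-! ### Faithfulness of the Artin action -/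

variable {ι : Type*}

/-- The elements `s 0, …, s (n - 1)` act on the free generators `x 0, …, x n` by the Artin
automorphisms and fix all other free generators. -/
structure IsArtinAction (φ : G →* MulAut (FreeGroup ι)) (s : ℕ → G) (x : ℕ → ι) (n : ℕ) :
    Prop where
  injOn : Set.InjOn x (Set.Iic n)
  apply_of : ∀ i < n, ∀ k ≤ n,
    φ (s i) (of (x k)) = hurwitzMove (fun l => of (x l)) i (i + 1) k
  apply_of_notMem : ∀ i < n, ∀ p ∉ x '' Set.Iic n, φ (s i) (of p) = of p

namespace IsArtinAction

variable {φ : G →* MulAut (FreeGroup ι)} {s : ℕ → G} {x : ℕ → ι} {n : ℕ}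

theorem apply_left (h : IsArtinAction φ s x n) {i : ℕ} (hi : i < n) :
    φ (s i) (of (x i)) = of (x (i + 1)) := by
  rw [h.apply_of i hi i hi.le, hurwitzMove_left]

theorem apply_right (h : IsArtinAction φ s x n) {i : ℕ} (hi : i < n) :
    φ (s i) (of (x (i + 1))) = (of (x (i + 1)))⁻¹ * of (x i) * of (x (i + 1)) := by
  rw [h.apply_of i hi (i + 1) hi, hurwitzMove_right _ i.lt_succ_self.ne]

theorem apply_of_ne (h : IsArtinAction φ s x n) {i k : ℕ} (hi : i < n) (hk : k ≤ n) (hki : k ≠ i)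
    (hki1 : k ≠ i + 1) : φ (s i) (of (x k)) = of (x k) := by
  rw [h.apply_of i hi k hk, hurwitzMove_of_ne _ hki hki1]

theorem zero_notMem_image_succ (h : IsArtinAction φ s x (n + 1)) :
    x 0 ∉ (fun i => x (i + 1)) '' Set.Iic n := by
  rintro ⟨i, hi, hxi⟩
  exact i.succ_ne_zero (h.injOn (Nat.succ_le_succ hi) (Nat.zero_le _) hxi)

theorem tail (h : IsArtinAction φ s x (n + 1)) :
    IsArtinAction φ (fun i => s (i + 1)) (fun i => x (i + 1)) n where
  injOn _ hi _ hj hij :=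
    Nat.succ_injective (h.injOn (Nat.succ_le_succ hi) (Nat.succ_le_succ hj) hij)
  apply_of i hi k hk := by
    rw [h.apply_of (i + 1) (Nat.succ_lt_succ hi) (k + 1) (Nat.succ_le_succ hk)]
    exact (hurwitzMove_comp_of_injOn (fun l => of (x l)) Nat.succ_injective.injOn
      (Set.mem_univ _) (Set.mem_univ _) (Set.mem_univ _)).symm
  apply_of_notMem i hi p hp := by
    rcases eq_or_ne p (x 0) with rfl | hp0
    · exact h.apply_of_ne (Nat.succ_lt_succ hi) (Nat.zero_le _) (by lia) (by lia)
    · refine h.apply_of_notMem (i + 1) (Nat.succ_lt_succ hi) p ?_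
      rintro ⟨_ | k, hk, rfl⟩
      exacts [hp0 rfl, hp ⟨k, Nat.le_of_succ_le_succ hk, rfl⟩]

theorem tupleHom_injective (h : IsArtinAction φ s x n) :
    Function.Injective (tupleHom (fun k => of (x k)) (n + 1)) := by
  have hx : Function.Injective fun k : Fin (n + 1) => x k := fun i j hij =>
    Fin.ext (h.injOn (Nat.le_of_lt_succ i.2) (Nat.le_of_lt_succ j.2) hij)
  have hmap : tupleHom (fun k => of (x k)) (n + 1) = FreeGroup.map fun k : Fin (n + 1) => x k :=
    FreeGroup.ext_hom _ _ fun k => by simp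
  exact hmap ▸ FreeGroup.map_injective hx

theorem descProd_apply_zero (h : IsArtinAction φ s x n) {k : ℕ} (hk : k ≤ n) :
    φ (descProd s k) (of (x 0)) = of (x k) := by
  induction k with
  | zero => simp [descProd_zero]
  | succ k ih => rw [descProd_succ, map_mul, MulAut.mul_apply, ih (by lia), h.apply_left hk]

end IsArtinAction

open Classical in
/-- The endomorphism of a free group that kills the generator `p`, that is, forgets the
corresponding strand. -/
noncomputable def kill (p : ι) : FreeGroup ι →* FreeGroup ι :=
  FreeGroup.lift (Function.update of p 1)

@[simp]
theorem kill_of_self (p : ι) : kill p (of p) = 1 := by simp [kill]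

theorem kill_of_ne {p q : ι} (h : q ≠ p) : kill p (of q) = of q := by simp [kill, h]

/-- The subgroup of elements that fix the generator `p` and whose action commutes with killing
`p`. -/
def strandStabilizer (φ : G →* MulAut (FreeGroup ι)) (p : ι) : Subgroup G where
  carrier := {g | φ g (of p) = of p ∧ ∀ z, kill p (φ g z) = φ g (kill p z)}
  one_mem' := by simp
  mul_mem' {a b} ha hb :=
    ⟨by rw [map_mul, MulAut.mul_apply, hb.1, ha.1],
      fun z => by rw [map_mul, MulAut.mul_apply, ha.2, hb.2, MulAut.mul_apply]⟩
  inv_mem' {a} ha :=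
    ⟨by rw [map_inv, MulAut.inv_apply, MulEquiv.symm_apply_eq, ha.1],
      fun z => by
        rw [map_inv, MulAut.inv_apply, MulAut.inv_apply, MulEquiv.eq_symm_apply, ← ha.2,
          MulEquiv.apply_symm_apply]⟩

theorem IsArtinAction.chainSubgroup_le_strandStabilizer {φ : G →* MulAut (FreeGroup ι)}
    {s : ℕ → G} {x : ℕ → ι} {n : ℕ} (h : IsArtinAction φ s x n) {p : ι}
    (hp : p ∉ x '' Set.Iic n) : chainSubgroup s n ≤ strandStabilizer φ p := by
  refine chainSubgroup_le fun i hi => ⟨h.apply_of_notMem i hi p hp, fun z => ?_⟩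
  suffices (kill p).comp (φ (s i)).toMonoidHom = (φ (s i)).toMonoidHom.comp (kill p) from
    DFunLike.congr_fun this z
  refine FreeGroup.ext_hom _ _ fun q => ?_
  change kill p (φ (s i) (of q)) = φ (s i) (kill p (of q))
  by_cases hq : q ∈ x '' Set.Iic n
  · obtain ⟨k, hk, rfl⟩ := hq
    have hkill : ∀ l ≤ n, kill p (of (x l)) = of (x l) := fun l hl =>
      kill_of_ne fun hl' => hp ⟨l, hl, hl'⟩
    rw [hkill k hk, h.apply_of i hi k hk, map_hurwitzMove]
    simp only [hurwitzMove, Function.update_apply, hkill i hi.le, hkill (i + 1) hi]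
    split_ifs <;> simp [hkill k hk]
  · rcases eq_or_ne q p with rfl | hqp
    · rw [h.apply_of_notMem i hi q hq, kill_of_self, map_one]
    · rw [h.apply_of_notMem i hi q hq, kill_of_ne hqp, h.apply_of_notMem i hi q hq]

/-- The element `a` acts trivially modulo the generator `p`, and it conjugates `p` by an element
which becomes `w` once `p` is killed. The model is the braid pushing the strand `p` along the
loop `w` around the others. -/
structure IsPush (φ : G →* MulAut (FreeGroup ι)) (p : ι) (a : G) (w : FreeGroup ι) : Prop where
  kill_apply : ∀ z, kill p (φ a z) = kill p z
  exists_conj : ∃ u, φ a (of p) = u⁻¹ * of p * u ∧ kill p u = w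

namespace IsPush

variable {φ : G →* MulAut (FreeGroup ι)} {p : ι} {a b c : G} {v w : FreeGroup ι}

theorem one : IsPush φ p 1 1 := ⟨by simp, 1, by simp, by simp⟩

theorem mul (ha : IsPush φ p a v) (hb : IsPush φ p b w) : IsPush φ p (a * b) (v * w) := by
  obtain ⟨u, hu, rfl⟩ := ha.exists_conj
  obtain ⟨t, ht, rfl⟩ := hb.exists_conj
  refine ⟨fun z => by rw [map_mul, MulAut.mul_apply, ha.kill_apply, hb.kill_apply],
    u * φ a t, ?_, by rw [map_mul, ha.kill_apply]⟩
  rw [map_mul, MulAut.mul_apply, ht]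
  simp only [map_mul, map_inv, hu]
  group

theorem inv (ha : IsPush φ p a v) : IsPush φ p a⁻¹ v⁻¹ := by
  obtain ⟨u, hu, rfl⟩ := ha.exists_conj
  have hkill : ∀ z, kill p (φ a⁻¹ z) = kill p z := fun z => by
    rw [← ha.kill_apply, ← MulAut.mul_apply, ← map_mul, mul_inv_cancel, map_one, MulAut.one_apply]
  refine ⟨hkill, (φ a⁻¹ u)⁻¹, ?_, by rw [map_inv, hkill]⟩
  rw [map_inv φ, MulAut.inv_apply, MulEquiv.symm_apply_eq]
  simp only [map_mul, map_inv, inv_inv, MulEquiv.apply_symm_apply, MulAut.inv_apply, hu]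
  group

theorem conj (ha : IsPush φ p a w) (hc : c ∈ strandStabilizer φ p) :
    IsPush φ p (c * a * c⁻¹) (φ c w) := by
  obtain ⟨u, hu, rfl⟩ := ha.exists_conj
  refine ⟨fun z => ?_, φ c u, ?_, hc.2 u⟩
  · simp only [map_mul, MulAut.mul_apply]
    rw [hc.2, ha.kill_apply, ← hc.2, ← MulAut.mul_apply, ← map_mul, mul_inv_cancel, map_one,
      MulAut.one_apply]
  · simp only [map_mul, MulAut.mul_apply]
    rw [(inv_mem hc).1, hu]
    simp only [map_mul, map_inv, hc.1]

theorem tupleHom {a : ℕ → G} {v : ℕ → FreeGroup ι} {n : ℕ}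
    (h : ∀ k < n, IsPush φ p (a k) (v k)) (w : FreeGroup (Fin n)) :
    IsPush φ p (tupleHom a n w) (tupleHom v n w) := by
  induction w using FreeGroup.induction_on with
  | C1 => simpa using one
  | of k => simpa using h k k.2
  | inv_of k _ => simpa using (h k k.2).inv
  | mul v w hv hw => simpa using hv.mul hw

theorem eq_one (ha : IsPush φ p a w) (hφ : φ a = 1) : w = 1 := by
  obtain ⟨u, hu, rfl⟩ := ha.exists_conj
  rw [hφ, MulAut.one_apply, mul_assoc, eq_inv_mul_iff_mul_eq] at hu
  exact map_eq_one_of_commute (kill p) hu (FreeGroup.of_ne_one p) (kill_of_self p)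

theorem map_eq_one_of_mul (ha : IsPush φ p a w) (hc : c ∈ strandStabilizer φ p)
    (hφ : φ (a * c) = 1) : φ c = 1 := by
  have happly : ∀ z, φ a (φ c z) = z := fun z => by
    rw [← MulAut.mul_apply, ← map_mul, hφ, MulAut.one_apply]
  suffices (φ c).toMonoidHom = MonoidHom.id _ from
    MulEquiv.ext fun z => DFunLike.congr_fun this z
  refine FreeGroup.ext_hom _ _ fun q => ?_
  change φ c (of q) = of q
  rcases eq_or_ne q p with rfl | hqp
  · exact hc.1
  · calc φ c (of q) = kill p (φ c (of q)) := by rw [hc.2, kill_of_ne hqp]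
      _ = kill p (φ a (φ c (of q))) := (ha.kill_apply _).symm
      _ = of q := by rw [happly, kill_of_ne hqp]

end IsPush

namespace IsArtinAction

variable {φ : G →* MulAut (FreeGroup ι)} {s : ℕ → G} {x : ℕ → ι} {n : ℕ}

theorem isPush_zero_mul_zero (h : IsArtinAction φ s x (n + 1)) :
    IsPush φ (x 0) (s 0 * s 0) (of (x 1)) := by
  have hx : x 1 ≠ x 0 := fun hx => h.zero_notMem_image_succ ⟨0, Nat.zero_le n, hx⟩
  have hleft : φ (s 0) (of (x 0)) = of (x 1) := h.apply_left n.succ_pos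
  have hright : φ (s 0) (of (x 1)) = (of (x 1))⁻¹ * of (x 0) * of (x 1) :=
    h.apply_right n.succ_pos
  refine ⟨fun z => ?_, of (x 1), by simp [hleft, hright], kill_of_ne hx⟩
  suffices (kill (x 0)).comp (φ (s 0 * s 0)).toMonoidHom = kill (x 0) from
    DFunLike.congr_fun this z
  refine FreeGroup.ext_hom _ _ fun q => ?_
  change kill (x 0) (φ (s 0 * s 0) (of q)) = kill (x 0) (of q)
  rw [map_mul, MulAut.mul_apply]
  rcases eq_or_ne q (x 0) with rfl | hq0
  · simp [hleft, hright]
  rcases eq_or_ne q (x 1) with rfl | hq1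
  · simp [hleft, hright]
  suffices φ (s 0) (of q) = of q by rw [this, this]
  by_cases hq : q ∈ x '' Set.Iic (n + 1)
  · obtain ⟨k, hk, rfl⟩ := hq
    exact h.apply_of_ne n.succ_pos hk (ne_of_apply_ne x hq0) (ne_of_apply_ne x hq1)
  · exact h.apply_of_notMem 0 n.succ_pos q hq

theorem isPush_meridian (h : IsArtinAction φ s x (n + 1)) {k : ℕ} (hk : k ≤ n) :
    IsPush φ (x 0) (meridian (fun i => s (i + 1)) (s 0 * s 0) k) (of (x (k + 1))) := by
  have hmem : descProd (fun i => s (i + 1)) k ∈ strandStabilizer φ (x 0) :=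
    h.tail.chainSubgroup_le_strandStabilizer h.zero_notMem_image_succ
      (descProd_mem fun i hi => mem_chainSubgroup _ (hi.trans_le hk))
  have happly : φ (descProd (fun i => s (i + 1)) k) (of (x 1)) = of (x (k + 1)) :=
    h.tail.descProd_apply_zero hk
  exact happly ▸ h.isPush_zero_mul_zero.conj hmem

theorem eq_zero_of_mul_descProd (h : IsArtinAction φ s x n) {g a c : G} {w : FreeGroup ι} {k : ℕ}
    (hk : k ≤ n) (hg : φ g = 1) (ha : IsPush φ (x 0) a w) (hc : c ∈ strandStabilizer φ (x 0))
    (hgk : g * descProd s k = a * c) : k = 0 := by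
  obtain ⟨u, hu, -⟩ := ha.exists_conj
  have hconj : of (x k) = u⁻¹ * of (x 0) * u := by
    have happly := DFunLike.congr_fun (congrArg φ hgk) (of (x 0))
    rwa [map_mul, map_mul, hg, one_mul, MulAut.mul_apply, hc.1, hu, h.descProd_apply_zero hk]
      at happly
  have hkill : kill (x 0) (of (x k)) = 1 := by simp [hconj]
  by_contra hk0
  rw [kill_of_ne fun hx => hk0 (h.injOn hk (Nat.zero_le n) hx)] at hkill
  exact FreeGroup.of_ne_one _ hkill

theorem eq_one_of_mem (h : IsArtinAction φ s x n) (hs : IsBraidChain s n) {g : G}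
    (hg : g ∈ chainSubgroup s n) (hφ : φ g = 1) : g = 1 := by
  induction n generalizing s x g with
  | zero => simpa [chainSubgroup] using hg
  | succ n ih =>
    obtain ⟨k, hk, hgk⟩ := hs.exists_mul_descProd_mem hg
    obtain ⟨w, c, hc, hgwc⟩ := hs.isTypeBChain_tail.exists_mul_of_mem_sup hgk
    have hpush := IsPush.tupleHom (fun k hk => h.isPush_meridian (Nat.le_of_lt_succ hk)) w
    have hstab := h.tail.chainSubgroup_le_strandStabilizer h.zero_notMem_image_succ hc
    obtain rfl := h.eq_zero_of_mul_descProd hk hφ hpush hstab hgwc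
    rw [descProd_zero, mul_one] at hgwc
    obtain rfl : c = 1 :=
      ih h.tail hs.tail hc (hpush.map_eq_one_of_mul hstab (hgwc ▸ hφ))
    rw [mul_one] at hgwc
    have hw : w = 1 := h.tail.tupleHom_injective <| by
      rw [map_one, hpush.eq_one (hgwc ▸ hφ)]
    rw [hgwc, hw, map_one]

end IsArtinAction

/-! ### Meridians acting by conjugation -/

theorem smul_eq_of_mem_chainSubgroup {M α : Type*} [Group M] [MulAction M α] (φ : G →* M)
    {s : ℕ → G} {n : ℕ} {z : α} (h : ∀ i < n, φ (s i) • z = z) {g : G}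
    (hg : g ∈ chainSubgroup s n) : φ g • z = z :=
  have hle : chainSubgroup s n ≤ (MulAction.stabilizer M z).comap φ := chainSubgroup_le h
  hle hg

namespace IsArtinAction

variable {φ : G →* MulAut (FreeGroup ι)} {s : ℕ → G} {x : ℕ → ι} {n : ℕ}

theorem apply_tupleHom (h : IsArtinAction φ s x n) {i : ℕ} (hi : i < n)
    (w : FreeGroup (Fin (n + 1))) :
    φ (s i) (tupleHom (fun k => of (x k)) (n + 1) w) =
      tupleHom (hurwitzMove (fun k => of (x k)) i (i + 1)) (n + 1) w :=
  (map_tupleHom (φ (s i)).toMonoidHom _ w).trans <| DFunLike.congr_fun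
    (tupleHom_congr fun k hk => h.apply_of i hi k (Nat.le_of_lt_succ hk)) w

theorem apply_boundaryWord (h : IsArtinAction φ s x n) {g : G} (hg : g ∈ chainSubgroup s n) :
    φ g (tupleHom (fun k => of (x k)) (n + 1) (boundaryWord (n + 1))) =
      tupleHom (fun k => of (x k)) (n + 1) (boundaryWord (n + 1)) :=
  smul_eq_of_mem_chainSubgroup φ (fun _ hi => (h.apply_tupleHom hi _).trans
    (tupleHom_hurwitzMove_boundaryWord _ (Nat.succ_lt_succ hi))) hg

open scoped Pointwise in
theorem apply_mem_range (h : IsArtinAction φ s x n) {g : G} (hg : g ∈ chainSubgroup s n)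
    {z : FreeGroup ι} (hz : z ∈ (tupleHom (fun k => of (x k)) (n + 1)).range) :
    φ g z ∈ (tupleHom (fun k => of (x k)) (n + 1)).range := by
  have hsmul : φ g • (tupleHom (fun k => of (x k)) (n + 1)).range =
      (tupleHom (fun k => of (x k)) (n + 1)).range := by
    refine smul_eq_of_mem_chainSubgroup φ (fun i hi => ?_) hg
    calc φ (s i) • (tupleHom (fun k => of (x k)) (n + 1)).range
        = ((φ (s i)).toMonoidHom.comp (tupleHom (fun k => of (x k)) (n + 1))).range :=
          (MonoidHom.range_comp _ _).symm
      _ = (tupleHom (hurwitzMove (fun k => of (x k)) i (i + 1)) (n + 1)).range :=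
          congrArg MonoidHom.range (MonoidHom.ext (h.apply_tupleHom hi))
      _ = _ := range_tupleHom_hurwitzMove _ (Nat.succ_lt_succ hi)
  exact hsmul ▸ Subgroup.smul_mem_pointwise_smul z (φ g) _ hz

theorem meridian_apply (h : IsArtinAction φ s x n) {τ : G}
    (hτ : ∀ z ∈ (tupleHom (fun k => of (x k)) (n + 1)).range,
      φ τ z = of (x 0) * z * (of (x 0))⁻¹) {k : ℕ} (hk : k ≤ n) {z : FreeGroup ι}
    (hz : z ∈ (tupleHom (fun k => of (x k)) (n + 1)).range) :
    φ (meridian s τ k) z = of (x k) * z * (of (x k))⁻¹ := by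
  have hmem : descProd s k ∈ chainSubgroup s n :=
    descProd_mem fun i hi => mem_chainSubgroup s (hi.trans_le hk)
  simp only [meridian, map_mul, MulAut.mul_apply]
  rw [hτ _ (h.apply_mem_range (inv_mem hmem) hz)]
  simp only [map_mul, map_inv, h.descProd_apply_zero hk, MulAut.apply_inv_self]

theorem tupleHom_meridian_apply (h : IsArtinAction φ s x n) {τ : G}
    (hτ : ∀ z ∈ (tupleHom (fun k => of (x k)) (n + 1)).range,
      φ τ z = of (x 0) * z * (of (x 0))⁻¹) (w : FreeGroup (Fin (n + 1))) {z : FreeGroup ι}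
    (hz : z ∈ (tupleHom (fun k => of (x k)) (n + 1)).range) :
    φ (tupleHom (meridian s τ) (n + 1) w) z =
      tupleHom (fun k => of (x k)) (n + 1) w * z *
        (tupleHom (fun k => of (x k)) (n + 1) w)⁻¹ := by
  induction w using FreeGroup.induction_on generalizing z with
  | C1 => simp
  | of k => simpa using h.meridian_apply hτ (Nat.le_of_lt_succ k.2) hz
  | inv_of k ih =>
    have hk : tupleHom (fun k => of (x k)) (n + 1) (of k) ∈
        (tupleHom (fun k => of (x k)) (n + 1)).range := ⟨_, rfl⟩
    rw [map_inv, map_inv, MulAut.inv_apply, MulEquiv.symm_apply_eq, map_inv, inv_inv,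
      ih (mul_mem (mul_mem (inv_mem hk) hz) hk)]
    group
  | mul v w hv hw =>
    have hw_mem : tupleHom (fun k => of (x k)) (n + 1) w ∈
        (tupleHom (fun k => of (x k)) (n + 1)).range := ⟨_, rfl⟩
    rw [map_mul, map_mul, MulAut.mul_apply, hw hz,
      hv (mul_mem (mul_mem hw_mem hz) (inv_mem hw_mem)), map_mul]
    group

theorem commute_boundaryWord (h : IsArtinAction φ s x n) {τ : G}
    (hτ : ∀ z ∈ (tupleHom (fun k => of (x k)) (n + 1)).range,
      φ τ z = of (x 0) * z * (of (x 0))⁻¹) {w : FreeGroup (Fin (n + 1))} {c : G}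
    (hc : c ∈ chainSubgroup s n) (hφ : φ (tupleHom (meridian s τ) (n + 1) w * c) = 1) :
    Commute w (boundaryWord (n + 1)) := by
  have hfix := DFunLike.congr_fun hφ (tupleHom (fun k => of (x k)) (n + 1) (boundaryWord (n + 1)))
  rw [map_mul, MulAut.mul_apply, h.apply_boundaryWord hc, h.tupleHom_meridian_apply hτ w ⟨_, rfl⟩,
    MulAut.one_apply, mul_inv_eq_iff_eq_mul, ← map_mul, ← map_mul] at hfix
  exact h.tupleHom_injective hfix

theorem descProd_apply_of_lt (h : IsArtinAction φ s x n) {k i : ℕ} (hki : k < i) (hi : i ≤ n) :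
    φ (descProd s k) (of (x i)) = of (x i) := by
  induction k with
  | zero => simp [descProd_zero]
  | succ k ih =>
    rw [descProd_succ, map_mul, MulAut.mul_apply, ih (by lia),
      h.apply_of_ne (by lia) hi (by lia) (by lia)]

theorem descProd_apply_succ (h : IsArtinAction φ s x n) {k i : ℕ} (hik : i < k) (hk : k ≤ n) :
    φ (descProd s k) (of (x (i + 1))) = (of (x k))⁻¹ * of (x i) * of (x k) := by
  induction k with
  | zero => lia
  | succ k ih =>
    rw [descProd_succ, map_mul, MulAut.mul_apply]
    rcases Nat.lt_succ_iff_lt_or_eq.1 hik with hlt | rfl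
    · rw [ih hlt (by lia)]
      simp only [map_mul, map_inv]
      rw [h.apply_left hk, h.apply_of_ne hk (by lia) hlt.ne (by lia)]
    · rw [h.descProd_apply_of_lt i.lt_succ_self hk, h.apply_right hk]

end IsArtinAction

/-! ### Cyclic chains -/

/-- A braid chain `s 0, …, s (n - 1)` extended by `s n` to a cycle which `ρ` rotates by one step.
The indices are read modulo `n + 1`. -/
structure IsCyclicBraidChain (s : ℕ → G) (ρ : G) (n : ℕ) : Prop extends IsBraidChain s n where
  conj_rotation : ∀ i, ρ * s i * ρ⁻¹ = s (i + 1)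
  periodic : s (n + 1) = s 0

/-- An Artin action on the free generators `x 0, …, x n` in which `ρ` permutes these generators
cyclically. -/
structure IsCyclicArtinAction (φ : G →* MulAut (FreeGroup ι)) (s : ℕ → G) (x : ℕ → ι) (ρ : G)
    (n : ℕ) : Prop extends IsArtinAction φ s x n where
  apply_rotation : ∀ i, φ ρ (of (x i)) = of (x (i + 1))
  periodic : x (n + 1) = x 0

/-- The loop of the first strand around the core of the annulus: the inverse of the braid which
moves the first strand past all others and then rotates it back to its place. -/
def coreLoop (s : ℕ → G) (ρ : G) (n : ℕ) : G :=
  (ρ * descProd s n)⁻¹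

namespace IsCyclicBraidChain

variable {s : ℕ → G} {ρ : G} {n : ℕ}

theorem conj_descProd_mul_zero (h : IsCyclicBraidChain s ρ n) (k : ℕ) :
    ρ * descProd s k * ρ⁻¹ * s 0 = descProd s (k + 1) := by
  induction k with
  | zero => simp [descProd]
  | succ k ih =>
    calc ρ * descProd s (k + 1) * ρ⁻¹ * s 0
        = (ρ * s k * ρ⁻¹) * (ρ * descProd s k * ρ⁻¹ * s 0) := by rw [descProd_succ]; group
      _ = descProd s (k + 1 + 1) := by rw [h.conj_rotation, ih, ← descProd_succ]

theorem four_coreLoop (h : IsCyclicBraidChain s ρ n) (hn : 0 < n) :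
    s 0 * coreLoop s ρ n * s 0 * coreLoop s ρ n = coreLoop s ρ n * s 0 * coreLoop s ρ n * s 0 := by
  obtain ⟨n, rfl⟩ := Nat.exists_eq_add_one.2 hn
  have hrot : ρ * s (n + 1) * ρ⁻¹ = s 0 := h.periodic ▸ h.conj_rotation (n + 1)
  have hD : (ρ * descProd s n * ρ⁻¹) * s 0 = descProd s (n + 1) := h.conj_descProd_mul_zero n
  have hleft : (ρ * descProd s (n + 1)) * s 0 * (ρ * descProd s (n + 1))⁻¹ =
      (ρ * descProd s n * ρ⁻¹)⁻¹ * s (n + 1) * (ρ * descProd s n * ρ⁻¹) := by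
    calc _ = ρ * (descProd s (n + 1) * s 0 * (descProd s (n + 1))⁻¹) * ρ⁻¹ := by group
      _ = (ρ * descProd s n * ρ⁻¹)⁻¹ * (ρ * s n * ρ⁻¹) * (ρ * descProd s n * ρ⁻¹) := by
        rw [h.conj_descProd n.lt_succ_self]; group
      _ = _ := by rw [h.conj_rotation]
  have hright : (ρ * descProd s (n + 1))⁻¹ * s 0 * (ρ * descProd s (n + 1)) =
      (descProd s (n + 1))⁻¹ * s (n + 1) * descProd s (n + 1) := by
    rw [← hrot]; group
  have hexchange : (ρ * descProd s (n + 1)) * s 0 * (ρ * descProd s (n + 1))⁻¹ * s 0 =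
      s 0 * ((ρ * descProd s (n + 1))⁻¹ * s 0 * (ρ * descProd s (n + 1))) := by
    rw [hleft, hright, mul_assoc, hD, ← hD]; group
  rw [coreLoop]
  generalize ρ * descProd s (n + 1) = T at *
  calc s 0 * T⁻¹ * s 0 * T⁻¹ = T⁻¹ * (T * s 0 * T⁻¹ * s 0) * T⁻¹ := by group
    _ = T⁻¹ * s 0 * T⁻¹ * s 0 := by rw [hexchange]; group

theorem isTypeBChain (h : IsCyclicBraidChain s ρ n) : IsTypeBChain s (coreLoop s ρ n) n where
  toIsBraidChain := h.toIsBraidChain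
  comm_base i hi := by
    have hrot : SemiconjBy ρ (s i) (s (i + 1)) := eq_mul_of_mul_inv_eq (h.conj_rotation i)
    exact Commute.inv_right (hrot.mul_left (h.semiconjBy_descProd hi le_rfl)).symm
  four := h.four_coreLoop

theorem closure_range_le_sup (h : IsCyclicBraidChain s ρ n) (hn : 0 < n) :
    Subgroup.closure (Set.range s) ≤
      (tupleHom (meridian s (coreLoop s ρ n)) (n + 1)).range ⊔ chainSubgroup s n := by
  set K := (tupleHom (meridian s (coreLoop s ρ n)) (n + 1)).range ⊔ chainSubgroup s n
  have hs : ∀ i < n, s i ∈ K := fun i hi => Subgroup.mem_sup_right (mem_chainSubgroup s hi)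
  have hτ : coreLoop s ρ n ∈ K := by
    simpa only [meridian_zero] using
      Subgroup.mem_sup_left (mem_range_tupleHom (meridian s (coreLoop s ρ n)) n.succ_pos)
  have hρ : ρ ∈ K := by
    simpa [coreLoop] using mul_mem (inv_mem hτ) (inv_mem (descProd_mem hs))
  rw [Subgroup.closure_le]
  rintro _ ⟨i, rfl⟩
  induction i with
  | zero => exact hs 0 hn
  | succ i ih => exact h.conj_rotation i ▸ mul_mem (mul_mem hρ ih) (inv_mem hρ)

end IsCyclicBraidChain

namespace IsCyclicArtinAction

variable {φ : G →* MulAut (FreeGroup ι)} {s : ℕ → G} {x : ℕ → ι} {ρ : G} {n : ℕ}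

theorem coreLoop_apply_of (h : IsCyclicArtinAction φ s x ρ n) {j : ℕ} (hj : j ≤ n) :
    φ (coreLoop s ρ n) (of (x j)) = of (x 0) * of (x j) * (of (x 0))⁻¹ := by
  have hzero : φ (ρ * descProd s n) (of (x 0)) = of (x 0) := by
    rw [map_mul, MulAut.mul_apply, h.descProd_apply_zero le_rfl, h.apply_rotation, h.periodic]
  rw [coreLoop, map_inv, MulAut.inv_apply, MulEquiv.symm_apply_eq]
  simp only [map_mul (φ _), map_inv (φ _), hzero]
  obtain _ | i := j
  · rw [hzero, mul_inv_cancel_right]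
  · rw [map_mul, MulAut.mul_apply, h.descProd_apply_succ hj le_rfl]
    simp only [map_mul, map_inv, h.apply_rotation, h.periodic]
    group

theorem coreLoop_apply (h : IsCyclicArtinAction φ s x ρ n) {z : FreeGroup ι}
    (hz : z ∈ (tupleHom (fun k => of (x k)) (n + 1)).range) :
    φ (coreLoop s ρ n) z = of (x 0) * z * (of (x 0))⁻¹ := by
  have hle : (tupleHom (fun k => of (x k)) (n + 1)).range ≤
      (φ (coreLoop s ρ n)).toMonoidHom.eqLocus (MulAut.conj (of (x 0))).toMonoidHom :=
    range_tupleHom_le fun j hj => h.coreLoop_apply_of (Nat.le_of_lt_succ hj)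
  exact hle hz

-- On a word in the meridians `deg` depends only on the exponent sum, so it does not kill the
-- boundary word; a word commuting with the boundary word and killed by `deg` is therefore trivial.
theorem eq_one_of_mem_closure (h : IsCyclicArtinAction φ s x ρ n)
    (hs : IsCyclicBraidChain s ρ n) (hn : 0 < n) {M : Type*} [CommGroup M] [IsMulTorsionFree M]
    (deg : G →* M) (hdeg : ∀ i, deg (s i) = 1) (hdegρ : deg ρ ≠ 1) {g : G}
    (hg : g ∈ Subgroup.closure (Set.range s)) (hφ : φ g = 1) : g = 1 := by
  obtain ⟨w, c, hc, rfl⟩ := hs.isTypeBChain.exists_mul_of_mem_sup (hs.closure_range_le_sup hn hg)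
  have hker : Subgroup.closure (Set.range s) ≤ deg.ker := by
    rw [Subgroup.closure_le]
    rintro _ ⟨i, rfl⟩
    exact hdeg i
  have hdeg_chain : chainSubgroup s n ≤ deg.ker := chainSubgroup_le fun i _ => hdeg i
  have hdeg_loop : deg (coreLoop s ρ n) ≠ 1 := by
    have hD : deg (descProd s n) = 1 := descProd_mem (K := deg.ker) fun i _ => hdeg i
    rwa [coreLoop, map_inv, map_mul, hD, mul_one, inv_ne_one]
  let degWord : FreeGroup (Fin (n + 1)) →* M :=
    deg.comp (tupleHom (meridian s (coreLoop s ρ n)) (n + 1))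
  have hdeg_w : degWord w = 1 := by
    simpa [degWord, MonoidHom.mem_ker.1 (hdeg_chain hc)] using hker hg
  have hdeg_boundary : degWord (boundaryWord (n + 1)) ≠ 1 := by
    have hpow : degWord (boundaryWord (n + 1)) = deg (coreLoop s ρ n) ^ (n + 1) := by
      simp [degWord, tupleHom_boundaryWord, map_list_prod, Function.comp_def, map_meridian]
    rwa [hpow, Ne, pow_eq_one_iff_left n.succ_ne_zero]
  have hcomm : Commute w (boundaryWord (n + 1)) :=
    h.commute_boundaryWord (fun _ => h.coreLoop_apply) hc hφ
  obtain rfl : w = 1 := by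
    by_contra hw
    exact hdeg_boundary (map_eq_one_of_commute degWord hcomm.symm hw hdeg_w)
  rw [map_one, one_mul] at hφ ⊢
  exact h.eq_one_of_mem hs.toIsBraidChain hc hφ

end IsCyclicArtinAction

/-! ### The affine and annular braid groups -/

theorem affineBraidGen_braid {n : ℕ} (hn : 2 < n) (i : ZMod n) :
    affineBraidGen n i * affineBraidGen n (i + 1) * affineBraidGen n i =
      affineBraidGen n (i + 1) * affineBraidGen n i * affineBraidGen n (i + 1) := by
  have hmem : braidRelWord i (i + 1) ∈ affineBraidRels n := by
    rw [affineBraidRels, if_neg hn.not_ge]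
    exact Or.inl ⟨i, rfl⟩
  have hone := PresentedGroup.one_of_mem hmem
  simp only [braidRelWord, map_mul, map_inv] at hone
  exact mul_inv_eq_one.1 hone

theorem commute_affineBraidGen {n : ℕ} (hn : 2 < n) {i j : ZMod n} (h1 : i - j ≠ 1)
    (h2 : i - j ≠ -1) : Commute (affineBraidGen n i) (affineBraidGen n j) := by
  have hmem : commRelWord i j ∈ affineBraidRels n := by
    rw [affineBraidRels, if_neg hn.not_ge]
    exact Or.inr ⟨i, j, h1, h2, rfl⟩
  have hone := PresentedGroup.one_of_mem hmem
  simp only [commRelWord, map_mul, map_inv] at hone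
  exact mul_inv_eq_one.1 hone

theorem isBraidChain_affineBraidGen (n : ℕ) :
    IsBraidChain (fun i => affineBraidGen (n + 1) i) n where
  braid i hi := by
    simpa only [Nat.cast_succ] using affineBraidGen_braid (by lia : 2 < n + 1) (i : ZMod (n + 1))
  comm i j hij hj := by
    have hcast : Set.InjOn (Nat.cast : ℕ → ZMod (n + 1)) (Set.Iio (n + 1)) :=
      CharP.natCast_injOn_Iio _ _
    refine commute_affineBraidGen (by lia) (fun h => ?_) fun h => ?_
    · have : i = j + 1 := hcast (by simp; lia) (by simp; lia) <| by
        rw [Nat.cast_succ, ← h, add_sub_cancel]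
      lia
    · have : i + 1 = j := hcast (by simp; lia) (by simp; lia) <| by
        rw [Nat.cast_succ, sub_eq_iff_eq_add.1 h, neg_add_cancel_comm]
      lia

/-- The endomorphism `s_i ↦ s_{i+c}` of the affine braid group. -/
def shiftHom (n : ℕ) (c : ZMod n) : AffineBraidGroup n →* AffineBraidGroup n :=
  PresentedGroup.toGroup (f := fun i => affineBraidGen n (i + c)) <| by
    intro r hr
    rw [affineBraidRels] at hr
    split_ifs at hr with hn
    · exact hr.elim
    rw [not_le] at hn
    obtain ⟨i, rfl⟩ | ⟨i, j, h1, h2, rfl⟩ := hr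
    · simp only [braidRelWord, map_mul, map_inv, FreeGroup.lift_apply_of]
      rw [mul_inv_eq_one, add_right_comm]
      exact affineBraidGen_braid hn _
    · simp only [commRelWord, map_mul, map_inv, FreeGroup.lift_apply_of]
      rw [mul_inv_eq_one]
      exact commute_affineBraidGen hn (by simpa using h1) (by simpa using h2)

theorem shiftHom_gen (n : ℕ) (c i : ZMod n) :
    shiftHom n c (affineBraidGen n i) = affineBraidGen n (i + c) :=
  PresentedGroup.toGroup.of _

theorem shiftHom_comp_eq_id {n : ℕ} {c d : ZMod n} (hdc : d + c = 0) :
    (shiftHom n c).comp (shiftHom n d) = MonoidHom.id _ :=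
  PresentedGroup.ext fun i => by
    change shiftHom n c (shiftHom n d (affineBraidGen n i)) = affineBraidGen n i
    rw [shiftHom_gen, shiftHom_gen, add_assoc, hdc, add_zero]

/-- The rotation automorphism `s_i ↦ s_{i+1}` of the affine braid group. -/
def affineRotation (n : ℕ) : MulAut (AffineBraidGroup n) :=
  MonoidHom.toMulEquiv (shiftHom n 1) (shiftHom n (-1)) (shiftHom_comp_eq_id (add_neg_cancel 1))
    (shiftHom_comp_eq_id (neg_add_cancel 1))

theorem affineRotation_gen (n : ℕ) (i : ZMod n) :
    affineRotation n (affineBraidGen n i) = affineBraidGen n (i + 1) :=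
  shiftHom_gen n 1 i

/-- The braid group of `m` strands in the annulus: the affine braid group extended by an infinite
cyclic group acting by rotation. -/
abbrev AnnularBraidGroup (m : ℕ) :=
  AffineBraidGroup m ⋊[zpowersHom _ (affineRotation m)] Multiplicative ℤ

/-- The generator `s_i` of the affine braid group, `i` taken modulo `m`, as an annular braid. -/
def annularGen (m i : ℕ) : AnnularBraidGroup m :=
  SemidirectProduct.inl (affineBraidGen m i)

/-- The annular braid which moves every strand to the position of the next one. -/
def annularRotation (m : ℕ) : AnnularBraidGroup m :=
  SemidirectProduct.inr (Multiplicative.ofAdd 1)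

theorem isCyclicBraidChain_annularGen (n : ℕ) :
    IsCyclicBraidChain (annularGen (n + 1)) (annularRotation (n + 1)) n where
  braid i hi := by
    simpa only [annularGen, map_mul] using
      congrArg SemidirectProduct.inl ((isBraidChain_affineBraidGen n).braid i hi)
  comm i j hij hj := ((isBraidChain_affineBraidGen n).comm i j hij hj).map SemidirectProduct.inl
  conj_rotation i := by
    rw [annularRotation, annularGen, ← map_inv, ← SemidirectProduct.inl_aut, zpowersHom_apply,
      toAdd_ofAdd, zpow_one, affineRotation_gen, annularGen, Nat.cast_succ]
  periodic := by simp only [annularGen, ZMod.natCast_self, Nat.cast_zero]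

theorem inl_mem_closure_range_annularGen {m : ℕ} [NeZero m] (b : AffineBraidGroup m) :
    SemidirectProduct.inl b ∈ Subgroup.closure (Set.range (annularGen m)) := by
  suffices hle : (⊤ : Subgroup (AffineBraidGroup m)) ≤
      (Subgroup.closure (Set.range (annularGen m))).comap SemidirectProduct.inl from
    hle (Subgroup.mem_top b)
  rw [← PresentedGroup.closure_range_of, Subgroup.closure_le]
  rintro _ ⟨i, rfl⟩
  refine Subgroup.subset_closure ⟨i.val, ?_⟩
  rw [annularGen, ZMod.natCast_zmod_val, affineBraidGen]

/-! ### Actions of the affine braid group -/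

/-- The generators of the affine braid group act on the free generators `y 0, …, y (m - 1)` by the
automorphisms `σ_i` and fix all other free generators. -/
structure IsAffineArtinAction {m : ℕ} (Φ : AffineBraidGroup m →* MulAut (FreeGroup ι))
    (y : ZMod m ↪ ι) : Prop where
  apply_of : ∀ i j, Φ (affineBraidGen m i) (of (y j)) = hurwitzMove (fun l => of (y l)) i (i + 1) j
  apply_of_notMem : ∀ i, ∀ p ∉ Set.range y, Φ (affineBraidGen m i) (of p) = of p

/-- The automorphism of a free group sending `y j` to `y (j + 1)` and fixing all free generators
outside the range of `y`. -/
noncomputable def freeRotation {m : ℕ} (y : ZMod m ↪ ι) : MulAut (FreeGroup ι) :=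
  FreeGroup.freeGroupCongr ((Equiv.addRight 1 : Equiv.Perm (ZMod m)).viaEmbedding y)

theorem freeRotation_of {m : ℕ} (y : ZMod m ↪ ι) (j : ZMod m) :
    freeRotation y (of (y j)) = of (y (j + 1)) := by
  simp [freeRotation, Equiv.Perm.viaEmbedding_apply]

theorem freeRotation_of_notMem {m : ℕ} (y : ZMod m ↪ ι) {p : ι} (hp : p ∉ Set.range y) :
    freeRotation y (of p) = of p := by
  simp [freeRotation, Equiv.Perm.viaEmbedding_apply_of_notMem _ _ _ hp]

theorem map_zpow_apply_of_conj {B K : Type*} [Group B] [Group K] (f : B →* K) {a : MulAut B}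
    {c : K} (h : ∀ b, f (a b) = c * f b * c⁻¹) (k : ℤ) (b : B) :
    f ((a ^ k) b) = c ^ k * f b * (c ^ k)⁻¹ := by
  induction k generalizing b with
  | zero => simp
  | succ k ih =>
    rw [zpow_add_one, MulAut.mul_apply, ih, h, zpow_add_one]
    group
  | pred k ih =>
    have hinv : f (a⁻¹ b) = c⁻¹ * f b * c := by
      have hb := h (a⁻¹ b)
      rw [MulAut.apply_inv_self] at hb
      rw [hb]
      group
    rw [zpow_sub_one, MulAut.mul_apply, ih, hinv, zpow_sub_one]
    group

namespace IsAffineArtinAction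

variable {m : ℕ} {Φ : AffineBraidGroup m →* MulAut (FreeGroup ι)} {y : ZMod m ↪ ι}

theorem freeRotation_apply (h : IsAffineArtinAction Φ y) (i : ZMod m) (z : FreeGroup ι) :
    freeRotation y (Φ (affineBraidGen m i) z) =
      Φ (affineBraidGen m (i + 1)) (freeRotation y z) := by
  suffices (freeRotation y * Φ (affineBraidGen m i)).toMonoidHom =
      (Φ (affineBraidGen m (i + 1)) * freeRotation y).toMonoidHom from DFunLike.congr_fun this z
  refine FreeGroup.ext_hom _ _ fun p => ?_
  change freeRotation y (Φ (affineBraidGen m i) (of p)) =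
    Φ (affineBraidGen m (i + 1)) (freeRotation y (of p))
  by_cases hp : p ∈ Set.range y
  · obtain ⟨j, rfl⟩ := hp
    calc freeRotation y (Φ (affineBraidGen m i) (of (y j)))
        = hurwitzMove (fun l => freeRotation y (of (y l))) i (i + 1) j := by
          rw [h.apply_of]
          exact map_hurwitzMove (freeRotation y).toMonoidHom _ _ _ _
      _ = hurwitzMove (fun l => of (y (l + 1))) i (i + 1) j := by
          simp only [freeRotation_of]
      _ = hurwitzMove (fun l => of (y l)) (i + 1) (i + 1 + 1) (j + 1) :=
          hurwitzMove_comp_of_injOn (fun l => of (y l)) (add_left_injective 1).injOn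
            (Set.mem_univ _) (Set.mem_univ _) (Set.mem_univ _)
      _ = Φ (affineBraidGen m (i + 1)) (freeRotation y (of (y j))) := by
          rw [freeRotation_of, h.apply_of]
  · rw [freeRotation_of_notMem y hp, h.apply_of_notMem i p hp, h.apply_of_notMem (i + 1) p hp,
      freeRotation_of_notMem y hp]

theorem map_affineRotation (h : IsAffineArtinAction Φ y) (b : AffineBraidGroup m) :
    Φ (affineRotation m b) = freeRotation y * Φ b * (freeRotation y)⁻¹ := by
  suffices Φ.comp (affineRotation m).toMonoidHom =
      (MulAut.conj (freeRotation y)).toMonoidHom.comp Φ from DFunLike.congr_fun this b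
  refine PresentedGroup.ext fun i => ?_
  change Φ (affineRotation m (affineBraidGen m i)) =
    freeRotation y * Φ (affineBraidGen m i) * (freeRotation y)⁻¹
  rw [affineRotation_gen, eq_mul_inv_iff_mul_eq]
  exact MulEquiv.ext fun z => (h.freeRotation_apply i z).symm

/-- The extension of an action of the affine braid group to the annular braid group, in which the
rotation acts by `freeRotation`. -/
noncomputable def annularExtension (h : IsAffineArtinAction Φ y) :
    AnnularBraidGroup m →* MulAut (FreeGroup ι) :=
  SemidirectProduct.lift Φ (zpowersHom _ (freeRotation y)) fun k =>
    MonoidHom.ext (map_zpow_apply_of_conj Φ h.map_affineRotation k.toAdd)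

theorem annularExtension_inl (h : IsAffineArtinAction Φ y) (b : AffineBraidGroup m) :
    h.annularExtension (SemidirectProduct.inl b) = Φ b :=
  SemidirectProduct.lift_inl _ _ _ b

theorem annularExtension_annularRotation (h : IsAffineArtinAction Φ y) :
    h.annularExtension (annularRotation m) = freeRotation y := by
  simp [annularExtension, annularRotation]

theorem isCyclicArtinAction {n : ℕ} {Φ : AffineBraidGroup (n + 1) →* MulAut (FreeGroup ι)}
    {y : ZMod (n + 1) ↪ ι} (h : IsAffineArtinAction Φ y) :
    IsCyclicArtinAction h.annularExtension (annularGen (n + 1)) (fun i => y i)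
      (annularRotation (n + 1)) n where
  injOn := y.injective.comp_injOn <|
    (CharP.natCast_injOn_Iio (ZMod (n + 1)) (n + 1)).mono fun _ => Nat.lt_succ_of_le
  apply_of i hi k hk := by
    rw [annularGen, h.annularExtension_inl, h.apply_of, ← Nat.cast_succ]
    exact (hurwitzMove_comp_of_injOn (fun l => of (y l)) (CharP.natCast_injOn_Iio _ (n + 1))
      (hi.trans n.lt_succ_self) (Nat.succ_lt_succ hi) (Nat.lt_succ_of_le hk)).symm
  apply_of_notMem i _ p hp := by
    rw [annularGen, h.annularExtension_inl]
    refine h.apply_of_notMem i p ?_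
    rintro ⟨j, rfl⟩
    exact hp ⟨j.val, Nat.le_of_lt_succ j.val_lt, congrArg y (ZMod.natCast_zmod_val j)⟩
  apply_rotation i := by
    rw [h.annularExtension_annularRotation, freeRotation_of, Nat.cast_succ]
  periodic := by rw [ZMod.natCast_self, Nat.cast_zero]

theorem of_sigmaHom {m : ℕ} {Φ : AffineBraidGroup m →* MulAut (FreeGroup (Option (ZMod m)))}
    (hΦ : ∀ i z, Φ (affineBraidGen m i) z = sigmaHom m i z) :
    IsAffineArtinAction Φ Function.Embedding.some where
  apply_of i j := by
    simp [hΦ, sigmaHom, sigmaMap, hurwitzMove, Function.update_apply]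
  apply_of_notMem i p hp := by
    cases p with
    | none => simp [hΦ, sigmaHom, sigmaMap]
    | some j => exact absurd ⟨j, rfl⟩ hp

end IsAffineArtinAction

end AffineBraid

open AffineBraid

theorem affineBraid_acts_faithfully_general {ι : Type*} {m : ℕ} (hm : 2 ≤ m)
    {Φ : AffineBraidGroup m →* MulAut (FreeGroup ι)} {y : ZMod m ↪ ι}
    (h : IsAffineArtinAction Φ y) : Function.Injective Φ := by
  obtain ⟨n, rfl⟩ : ∃ n, m = n + 1 := ⟨m - 1, by lia⟩
  refine (injective_iff_map_eq_one Φ).2 fun b hb => ?_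
  have hone : (SemidirectProduct.inl b : AnnularBraidGroup (n + 1)) = 1 :=
    h.isCyclicArtinAction.eq_one_of_mem_closure (isCyclicBraidChain_annularGen n)
      (Nat.le_of_succ_le_succ hm) SemidirectProduct.rightHom
      (fun _ => SemidirectProduct.rightHom_inl _)
      (by rw [annularRotation, SemidirectProduct.rightHom_inr]; decide)
      (inl_mem_closure_range_annularGen b) ((h.annularExtension_inl b).trans hb)
  exact SemidirectProduct.inl_injective (hone.trans (map_one _).symm)

/-- For every `m ≥ 2`, the group homomorphism `B(Ã_{m−1}) → Aut(F_{m+1})` sending `s_i` to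
`σ_i` for all `i ∈ ℤ/m` is injective; that is, the affine braid group `B(Ã_{m−1})` acts
faithfully on the free group `F_{m+1}` via the automorphisms `σ_i`. -/
theorem affineBraid_acts_faithfully (m : ℕ) (hm : 2 ≤ m)
    (Φ : AffineBraidGroup m →* MulAut (FreeGroup (Option (ZMod m))))
    (hΦ : ∀ (i : ZMod m) (x : FreeGroup (Option (ZMod m))),
      Φ (affineBraidGen m i) x = sigmaHom m i x) :
    Function.Injective Φ :=
  affineBraid_acts_faithfully_general hm (IsAffineArtinAction.of_sigmaHom hΦ)
end
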